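/- The Hochschild cohomology of A = FK(3) over a field of characteristic ≠ 2,3 satisfies: dim HHⁿ(A) = (5/2)n + 4 if n ≡ 0 (mod 4), dim HHⁿ(A) = (5/2)n + 5 if n ≡ 2 (mod 4), and dim HHⁿ(A) = (5n+9)/2 if n is odd. -/

import Mathlib

/-!
The Hochschild cohomology `HHⁿ(A) = Extⁿ_{A^e}(A, A)` of the Fomin–Kirillov algebra `A = FK(3)`
satisfies `dim HHⁿ(A) = (5/2)n + 4` if `n ≡ 0 (mod 4)`, `(5/2)n + 5` if `n ≡ 2 (mod 4)`, and
`(5n+9)/2` if `n` is odd.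
-/

open FreeAlgebra CategoryTheory
open scoped TensorProduct

/-- The defining relations of the Fomin–Kirillov algebra `FK(3)`. -/
inductive FKRel (k : Type) [Field k] : FreeAlgebra k (Fin 3) → FreeAlgebra k (Fin 3) → Prop
  | sq_a : FKRel k (ι k (0 : Fin 3) * ι k (0 : Fin 3)) 0
  | sq_b : FKRel k (ι k (1 : Fin 3) * ι k (1 : Fin 3)) 0
  | sq_c : FKRel k (ι k (2 : Fin 3) * ι k (2 : Fin 3)) 0
  | rel1 : FKRel k (ι k (0 : Fin 3) * ι k (1 : Fin 3) + ι k (1 : Fin 3) * ι k (2 : Fin 3) +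
      ι k (2 : Fin 3) * ι k (0 : Fin 3)) 0
  | rel2 : FKRel k (ι k (1 : Fin 3) * ι k (0 : Fin 3) + ι k (0 : Fin 3) * ι k (2 : Fin 3) +
      ι k (2 : Fin 3) * ι k (1 : Fin 3)) 0

/-- The Fomin–Kirillov algebra on three generators. -/
abbrev FK3 (k : Type) [Field k] := RingQuot (FKRel k)

variable (k : Type) [Field k]

/-- The enveloping algebra `A^e = A ⊗ₖ Aᵒᵖ` of `A = FK(3)`. -/
abbrev FKAe := FK3 k ⊗[k] (FK3 k)ᵐᵒᵖ

noncomputable instance : Module (FKAe k) (FK3 k) := TensorProduct.Algebra.module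

/-- The Hochschild cohomology `HHⁿ(FK(3)) = Extⁿ_{A^e}(A, A)`. -/
noncomputable def HHcohomology (n : ℕ) : ModuleCat k :=
  ((Ext k (ModuleCat (FKAe k)) n).obj
      (Opposite.op (ModuleCat.of (FKAe k) (FK3 k)))).obj (ModuleCat.of (FKAe k) (FK3 k))

namespace FKThree

section Lists

/-- The linear combination of the vectors `φ i` described by a list of pairs (index, coefficient). -/
def ev {M : Type*} [AddCommGroup M] (φ : ℕ → M) : List (ℕ × ℤ) → M
  | [] => 0
  | p :: L => p.2 • φ p.1 + ev φ L

/-- Multiplication of a formal combination by an integer. -/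
def scale (c : ℤ) : List (ℕ × ℤ) → List (ℕ × ℤ)
  | [] => []
  | p :: L => (p.1, Int.mul c p.2) :: scale c L

/-- The linear extension of `T` to formal combinations. -/
def lin (T : ℕ → List (ℕ × ℤ)) : List (ℕ × ℤ) → List (ℕ × ℤ)
  | [] => []
  | p :: L => scale p.2 (T p.1) ++ lin T L

/-- The sum of all coefficients. -/
def total : List (ℕ × ℤ) → ℤ
  | [] => 0
  | p :: L => Int.add p.2 (total L)

/-- Whether all indices vanish. -/
def allZero : List (ℕ × ℤ) → Bool
  | [] => true
  | p :: L => Nat.beq p.1 0 && allZero L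

/-- The terms whose index is congruent to `b` modulo two, with halved indices. -/
def half (b : ℕ) : List (ℕ × ℤ) → List (ℕ × ℤ)
  | [] => []
  | p :: L => bif Nat.beq (Nat.mod p.1 2) b then (Nat.div p.1 2, p.2) :: half b L else half b L

/-- Vanishing of a formal combination with indices below `2 ^ n`, tested by radix splitting. -/
def isZero : ℕ → List (ℕ × ℤ) → Bool
  | _, [] => true
  | 0, L => allZero L && Nat.beq (Int.natAbs (total L)) 0
  | n + 1, L => isZero n (half 0 L) && isZero n (half 1 L)

variable {M N : Type*} [AddCommGroup M] [AddCommGroup N]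

@[simp] lemma ev_nil (φ : ℕ → M) : ev φ [] = 0 := rfl

@[simp] lemma ev_cons (φ : ℕ → M) (p : ℕ × ℤ) (L : List (ℕ × ℤ)) :
    ev φ (p :: L) = p.2 • φ p.1 + ev φ L := rfl

@[simp] lemma ev_append (φ : ℕ → M) (L L' : List (ℕ × ℤ)) :
    ev φ (L ++ L') = ev φ L + ev φ L' := by
  induction L with
  | nil => simp
  | cons p L ih => simp [ih, add_assoc]

@[simp] lemma ev_scale (φ : ℕ → M) (c : ℤ) (L : List (ℕ × ℤ)) :
    ev φ (scale c L) = c • ev φ L := by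
  induction L with
  | nil => simp [scale]
  | cons p L ih =>
    simp [scale, ih, mul_smul]

lemma ev_lin (φ : ℕ → M) (T : ℕ → List (ℕ × ℤ)) (L : List (ℕ × ℤ)) :
    ev φ (lin T L) = ev (fun i => ev φ (T i)) L := by
  induction L with
  | nil => rfl
  | cons p L ih => simp [lin, ih]

lemma map_ev {F : Type*} [FunLike F M N] [AddMonoidHomClass F M N] (f : F) (φ : ℕ → M)
    (L : List (ℕ × ℤ)) : f (ev φ L) = ev (fun i => f (φ i)) L := by
  induction L with
  | nil => simp
  | cons p L ih => simp [ih]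

lemma map_ev_lin {F : Type*} [FunLike F M N] [AddMonoidHomClass F M N] (f : F) {φ : ℕ → M}
    {ψ : ℕ → N} {T : ℕ → List (ℕ × ℤ)} (h : ∀ i, f (φ i) = ev ψ (T i)) (L : List (ℕ × ℤ)) :
    f (ev φ L) = ev ψ (lin T L) := by
  rw [map_ev, ev_lin]
  simp only [h]

lemma ev_half (φ : ℕ → M) (L : List (ℕ × ℤ)) :
    ev φ L = ev (fun i => φ (2 * i)) (half 0 L) + ev (fun i => φ (2 * i + 1)) (half 1 L) := by
  induction L with
  | nil => simp [half]
  | cons p L ih =>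
    have h0 : Nat.mod p.1 2 = p.1 % 2 := rfl
    have h1 : Nat.div p.1 2 = p.1 / 2 := rfl
    have hd := Nat.div_add_mod p.1 2
    rw [ev_cons, ih]
    rcases Nat.mod_two_eq_zero_or_one p.1 with h | h
    · have e : p.1 = 2 * (p.1 / 2) := by omega
      simp only [half, h0, h1, h, Nat.beq, cond_true, cond_false, ev_cons, ← e]
      abel
    · have e : p.1 = 2 * (p.1 / 2) + 1 := by omega
      simp only [half, h0, h1, h, Nat.beq, cond_true, cond_false, ev_cons, ← e]
      abel

lemma ev_eq_total (φ : ℕ → M) (L : List (ℕ × ℤ)) (h : allZero L = true) :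
    ev φ L = total L • φ 0 := by
  induction L with
  | nil => simp [total]
  | cons p L ih =>
    simp only [allZero, Bool.and_eq_true] at h
    have e : p.1 = 0 := Nat.eq_of_beq_eq_true h.1
    have : total (p :: L) = p.2 + total L := rfl
    rw [ev_cons, ih h.2, this, add_smul, e]

lemma ev_eq_zero (n : ℕ) (L : List (ℕ × ℤ)) (h : isZero n L = true) (φ : ℕ → M) :
    ev φ L = 0 := by
  induction n generalizing L φ with
  | zero =>
    cases L with
    | nil => rfl
    | cons p L =>
      simp only [isZero, Bool.and_eq_true] at h
      have e : total (p :: L) = 0 := Int.natAbs_eq_zero.1 (Nat.eq_of_beq_eq_true h.2)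
      rw [ev_eq_total φ _ h.1, e, zero_smul]
  | succ n ih =>
    cases L with
    | nil => rfl
    | cons p L =>
      simp only [isZero, Bool.and_eq_true] at h
      rw [ev_half, ih _ h.1, ih _ h.2, add_zero]

end Lists

section Algebra

/-- The structure constants of `FK(3)` in the basis
`1, a, b, c, ab, bc, ba, ac, aba, abc, bac, abac`. -/
def mulTable : List (List (List (ℕ × ℤ))) :=
  [[[(0, 1)], [(1, 1)], [(2, 1)], [(3, 1)], [(4, 1)], [(5, 1)], [(6, 1)], [(7, 1)], [(8, 1)],
    [(9, 1)], [(10, 1)], [(11, 1)]],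
   [[(1, 1)], [], [(4, 1)], [(7, 1)], [], [(9, 1)], [(8, 1)], [], [], [], [(11, 1)], []],
   [[(2, 1)], [(6, 1)], [], [(5, 1)], [(8, 1)], [], [], [(10, 1)], [], [(11, 1)], [], []],
   [[(3, 1)], [(4, -1), (5, -1)], [(6, -1), (7, -1)], [], [(10, 1)], [(10, -1)], [(9, 1)], [(9, -1)],
    [(11, -1)], [], [], []],
   [[(4, 1)], [(8, 1)], [], [(9, 1)], [], [], [], [(11, 1)], [], [], [], []],
   [[(5, 1)], [(8, -1)], [(10, -1)], [], [], [], [(11, 1)], [(11, -1)], [], [], [], []],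
   [[(6, 1)], [], [(8, 1)], [(10, 1)], [], [(11, 1)], [], [], [], [], [], []],
   [[(7, 1)], [(9, -1)], [(8, -1)], [], [(11, 1)], [(11, -1)], [], [], [], [], [], []],
   [[(8, 1)], [], [], [(11, 1)], [], [], [], [], [], [], [], []],
   [[(9, 1)], [], [(11, -1)], [], [], [], [], [], [], [], [], []],
   [[(10, 1)], [(11, -1)], [], [], [], [], [], [], [], [], [], []],
   [[(11, 1)], [], [], [], [], [], [], [], [], [], [], []]]

/-- The product of two basis elements. -/
def tmul (u v : ℕ) : List (ℕ × ℤ) := (mulTable.getD u []).getD v []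

lemma tmul_of_le_left {u : ℕ} (h : 12 ≤ u) (v : ℕ) : tmul u v = [] := by
  have : mulTable.getD u [] = [] := List.getD_eq_default _ _ h
  simp only [tmul, this, List.getD_nil]

lemma tmul_of_le_right (u : ℕ) {v : ℕ} (h : 12 ≤ v) : tmul u v = [] := by
  by_cases hu : u < 12
  · refine List.getD_eq_default _ _ (le_trans (le_of_eq ?_) h)
    interval_cases u <;> rfl
  · exact tmul_of_le_left (not_lt.1 hu) v

/-- The words `1, a, b, c, ab, bc, ba, ac, aba, abc, bac, abac`, extended by zero. -/
def word {A : Type*} [Ring A] (a b c : A) : ℕ → A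
  | 0 => 1
  | 1 => a
  | 2 => b
  | 3 => c
  | 4 => a * b
  | 5 => b * c
  | 6 => b * a
  | 7 => a * c
  | 8 => a * (b * a)
  | 9 => a * (b * c)
  | 10 => b * (a * c)
  | 11 => a * (b * (a * c))
  | _ => 0

/-- The letter with a given index. -/
def letter {A : Type*} (a b c : A) : ℕ → A
  | 0 => a
  | 1 => b
  | _ => c

/-- The product of a word with a letter on the left. -/
lemma letter_mul_word {A : Type*} [Ring A] {a b c : A} (aa : a * a = 0) (bb : b * b = 0)
    (cc : c * c = 0) (r₁ : a * b + b * c + c * a = 0) (r₂ : b * a + a * c + c * b = 0)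
    {i : ℕ} (hi : i < 3) {v : ℕ} (hv : v < 12) :
    letter a b c i * word a b c v = ev (word a b c) (tmul (i + 1) v) := by
  have ca : c * a = -(a * b) + -(b * c) := by rw [← sub_eq_zero, ← r₁]; abel
  have cb : c * b = -(b * a) + -(a * c) := by rw [← sub_eq_zero, ← r₂]; abel
  have aa' (x) : a * (a * x) = 0 := by rw [← mul_assoc, aa, zero_mul]
  have bb' (x) : b * (b * x) = 0 := by rw [← mul_assoc, bb, zero_mul]
  have ca' (x) : c * (a * x) = -(a * (b * x)) + -(b * (c * x)) := by
    rw [← mul_assoc, ca, add_mul, neg_mul, neg_mul, mul_assoc, mul_assoc]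
  have cb' (x) : c * (b * x) = -(b * (a * x)) + -(a * (c * x)) := by
    rw [← mul_assoc, cb, add_mul, neg_mul, neg_mul, mul_assoc, mul_assoc]
  have bab : b * (a * b) = a * (b * a) := by
    have h := ca' a
    rw [aa, mul_zero, ca, mul_add, mul_neg, mul_neg, bb', neg_zero, add_zero, neg_neg] at h
    rw [eq_comm, ← sub_eq_zero, ← neg_eq_zero, h]
    abel
  have bab' (x) : b * (a * (b * x)) = a * (b * (a * x)) := by
    rw [← mul_assoc a b x, ← mul_assoc, bab, mul_assoc, mul_assoc]
  interval_cases i <;> interval_cases v <;>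
    simp [tmul, mulTable, word, letter, aa, bb, cc, ca, cb, aa', bb', ca', cb', bab, bab',
      mul_add]

/-- The words as products of letters. -/
def spelling : ℕ → List ℕ
  | 0 => []
  | 1 => [0]
  | 2 => [1]
  | 3 => [2]
  | 4 => [0, 1]
  | 5 => [1, 2]
  | 6 => [1, 0]
  | 7 => [0, 2]
  | 8 => [0, 1, 0]
  | 9 => [0, 1, 2]
  | 10 => [1, 0, 2]
  | _ => [0, 1, 0, 2]

/-- The product of a sequence of letters with a formal combination of words. -/
def spellMul : List ℕ → List (ℕ × ℤ) → List (ℕ × ℤ)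
  | [], L => L
  | i :: w, L => lin (tmul (i + 1)) (spellMul w L)

lemma spellMul_tmul : ∀ u < 12, ∀ v < 12,
    isZero 4 (spellMul (spelling u) [(v, 1)] ++ scale (-1) (tmul u v)) = true := by
  decide +kernel

variable (k : Type) [Field k]

/-- The generators of `FK(3)`. -/
noncomputable def gen (i : Fin 3) : FK3 k := RingQuot.mkAlgHom k (FKRel k) (ι k i)

/-- The basis elements of `FK(3)`, extended by zero. -/
noncomputable def e : ℕ → FK3 k := word (gen k 0) (gen k 1) (gen k 2)

lemma e_of_le {u : ℕ} (h : 12 ≤ u) : e k u = 0 := by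
  obtain ⟨t, rfl⟩ := Nat.exists_eq_add_of_le' h
  rfl

lemma letter_mul_e {i : ℕ} (hi : i < 3) (v : ℕ) :
    letter (gen k 0) (gen k 1) (gen k 2) i * e k v = ev (e k) (tmul (i + 1) v) := by
  by_cases hv : v < 12
  · refine letter_mul_word ?_ ?_ ?_ ?_ ?_ hi hv
    · simpa [gen] using RingQuot.mkAlgHom_rel k (FKRel.sq_a (k := k))
    · simpa [gen] using RingQuot.mkAlgHom_rel k (FKRel.sq_b (k := k))
    · simpa [gen] using RingQuot.mkAlgHom_rel k (FKRel.sq_c (k := k))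
    · simpa [gen] using RingQuot.mkAlgHom_rel k (FKRel.rel1 (k := k))
    · simpa [gen] using RingQuot.mkAlgHom_rel k (FKRel.rel2 (k := k))
  · rw [e_of_le k (not_lt.1 hv), tmul_of_le_right _ (not_lt.1 hv), mul_zero, ev_nil]

lemma spelling_lt (u : ℕ) : ∀ i ∈ spelling u, i < 3 := by
  unfold spelling
  split <;> decide

lemma prod_mul_ev (w : List ℕ) (hw : ∀ i ∈ w, i < 3) (L : List (ℕ × ℤ)) :
    (w.map (letter (gen k 0) (gen k 1) (gen k 2))).prod * ev (e k) L =
      ev (e k) (spellMul w L) := by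
  induction w with
  | nil => simp [spellMul]
  | cons i w ih =>
    rw [List.map_cons, List.prod_cons, mul_assoc, ih fun j hj => hw j (List.mem_cons_of_mem _ hj)]
    exact map_ev_lin (AddMonoidHom.mulLeft (letter (gen k 0) (gen k 1) (gen k 2) i))
      (fun v => letter_mul_e k (hw i List.mem_cons_self) v) _

lemma e_eq_prod {u : ℕ} (hu : u < 12) :
    e k u = ((spelling u).map (letter (gen k 0) (gen k 1) (gen k 2))).prod := by
  interval_cases u <;> simp [e, word, spelling, letter]

/-- The multiplication table of `FK(3)`. -/
lemma e_mul_e (u v : ℕ) : e k u * e k v = ev (e k) (tmul u v) := by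
  by_cases hu : u < 12
  · by_cases hv : v < 12
    · have h := ev_eq_zero 4 _ (spellMul_tmul u hu v hv) (e k)
      rw [ev_append, ev_scale, neg_one_smul, add_neg_eq_zero, ← prod_mul_ev k _ (spelling_lt u),
        ← e_eq_prod k hu] at h
      simpa using h
    · rw [e_of_le k (not_lt.1 hv), tmul_of_le_right _ (not_lt.1 hv), mul_zero, ev_nil]
  · rw [e_of_le k (not_lt.1 hu), tmul_of_le_left (not_lt.1 hu), zero_mul, ev_nil]

end Algebra

section Basis

variable (k : Type) [Field k]

/-- The standard basis of `k¹²`, extended by zero. -/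
def std (v : ℕ) : Fin 12 → k := fun j => if (j : ℕ) = v then 1 else 0

lemma std_of_le {v : ℕ} (h : 12 ≤ v) : std k v = 0 := by
  ext j
  simp only [std, Pi.zero_apply, ite_eq_right_iff]
  omega

lemma basisFun_eq_std (v : Fin 12) : Pi.basisFun k (Fin 12) v = std k v := by
  ext j
  simp [std, Pi.single_apply, Fin.ext_iff]

/-- Left multiplication by a generator on `k¹²`. -/
noncomputable def leftMul (i : ℕ) : Module.End k (Fin 12 → k) :=
  (Pi.basisFun k (Fin 12)).constr k fun v => ev (std k) (tmul (i + 1) v)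

lemma leftMul_std (i v : ℕ) : leftMul k i (std k v) = ev (std k) (tmul (i + 1) v) := by
  by_cases hv : v < 12
  · have h := (Pi.basisFun k (Fin 12)).constr_basis k
      (fun v => ev (std k) (tmul (i + 1) v)) ⟨v, hv⟩
    rwa [basisFun_eq_std] at h
  · rw [std_of_le k (not_lt.1 hv), tmul_of_le_right _ (not_lt.1 hv), map_zero, ev_nil]

lemma end_ext {f g : Module.End k (Fin 12 → k)} (h : ∀ v < 12, f (std k v) = g (std k v)) :
    f = g := by
  refine (Pi.basisFun k (Fin 12)).ext fun v => ?_
  rw [basisFun_eq_std]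
  exact h v v.2

/-- The quadratic relations of `FK(3)` as lists of pairs of letters. -/
lemma leftMul_relation (R : List (ℕ × ℕ))
    (hR : ∀ v < 12, isZero 4 (R.flatMap fun p => lin (tmul (p.1 + 1)) (tmul (p.2 + 1) v)) = true) :
    (R.map fun p => leftMul k p.1 * leftMul k p.2).sum = 0 := by
  refine end_ext k fun v hv => ?_
  have key : ∀ Q : List (ℕ × ℕ),
      (Q.map fun p => leftMul k p.1 * leftMul k p.2).sum (std k v) =
        ev (std k) (Q.flatMap fun p => lin (tmul (p.1 + 1)) (tmul (p.2 + 1) v)) := by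
    intro Q
    induction Q with
    | nil => simp
    | cons p Q ih =>
      rw [List.map_cons, List.sum_cons, List.flatMap_cons, ev_append, ← ih, LinearMap.add_apply,
        Module.End.mul_apply, leftMul_std, map_ev_lin (leftMul k p.1) (leftMul_std k p.1)]
  rw [key, ev_eq_zero 4 _ (hR v hv), LinearMap.zero_apply]

/-- The left regular representation of `FK(3)` on `k¹²`. -/
noncomputable def regular : FK3 k →ₐ[k] Module.End k (Fin 12 → k) :=
  RingQuot.liftAlgHom k ⟨FreeAlgebra.lift k fun i : Fin 3 => leftMul k i, by
    intro x y h
    cases h <;> simp only [map_add, map_mul, map_zero, FreeAlgebra.lift_ι_apply]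
    · simpa using leftMul_relation k [(0, 0)] (by decide +kernel)
    · simpa using leftMul_relation k [(1, 1)] (by decide +kernel)
    · simpa using leftMul_relation k [(2, 2)] (by decide +kernel)
    · simpa [add_assoc] using leftMul_relation k [(0, 1), (1, 2), (2, 0)] (by decide +kernel)
    · simpa [add_assoc] using leftMul_relation k [(1, 0), (0, 2), (2, 1)] (by decide +kernel)⟩

lemma regular_gen (i : Fin 3) : regular k (gen k i) = leftMul k i := by
  simp [regular, gen, RingQuot.liftAlgHom_mkAlgHom_apply]

lemma regular_e {u : ℕ} (hu : u < 12) : regular k (e k u) (std k 0) = std k u := by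
  interval_cases u <;>
    simp [e, word, regular_gen, leftMul_std, tmul, mulTable, ev]

lemma linearIndependent_e : LinearIndependent k fun u : Fin 12 => e k u := by
  refine LinearIndependent.of_comp
    ((LinearMap.applyₗ (std k 0)).comp (regular k).toLinearMap) ?_
  convert (Pi.basisFun k (Fin 12)).linearIndependent using 1
  ext1 u
  rw [basisFun_eq_std]
  exact regular_e k u.2

lemma ev_mem {M : Type*} [AddCommGroup M] (S : AddSubgroup M) {φ : ℕ → M} (h : ∀ i, φ i ∈ S)
    (L : List (ℕ × ℤ)) : ev φ L ∈ S := by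
  induction L with
  | nil => exact S.zero_mem
  | cons p L ih => exact S.add_mem (S.zsmul_mem (h _) _) ih

lemma e_mem_span (u : ℕ) :
    e k u ∈ Submodule.span k (Set.range fun u : Fin 12 => e k u) := by
  by_cases hu : u < 12
  · exact Submodule.subset_span ⟨⟨u, hu⟩, rfl⟩
  · rw [e_of_le k (not_lt.1 hu)]
    exact Submodule.zero_mem _

lemma span_e : ⊤ ≤ Submodule.span k (Set.range fun u : Fin 12 => e k u) := by
  set S := Submodule.span k (Set.range fun u : Fin 12 => e k u) with hS
  have hgen (i : Fin 3) : ∀ s ∈ S, gen k i * s ∈ S := by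
    intro s hs
    induction hs using Submodule.span_induction with
    | mem x hx =>
      obtain ⟨v, rfl⟩ := hx
      have h : gen k i * e k v = ev (e k) (tmul (i + 1) v) := by
        rw [← letter_mul_e k i.2]
        fin_cases i <;> rfl
      rw [h]
      exact ev_mem S.toAddSubgroup (e_mem_span k) _
    | zero => rw [mul_zero]; exact S.zero_mem
    | add x y _ _ hx hy => rw [mul_add]; exact S.add_mem hx hy
    | smul c x _ hx => rw [mul_smul_comm]; exact S.smul_mem c hx
  have hall (x : FreeAlgebra k (Fin 3)) : ∀ s ∈ S, RingQuot.mkAlgHom k (FKRel k) x * s ∈ S := by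
    induction x using FreeAlgebra.induction with
    | grade0 c =>
      intro s hs
      rw [AlgHom.commutes, ← Algebra.smul_def]
      exact S.smul_mem c hs
    | grade1 i => exact hgen i
    | mul x y hx hy =>
      intro s hs
      rw [map_mul, mul_assoc]
      exact hx _ (hy _ hs)
    | add x y hx hy =>
      intro s hs
      rw [map_add, add_mul]
      exact S.add_mem (hx _ hs) (hy _ hs)
  intro x _
  obtain ⟨y, rfl⟩ := RingQuot.mkAlgHom_surjective k (FKRel k) x
  have h := hall y 1 (e_mem_span k 0)
  rwa [mul_one] at h

/-- The basis of `FK(3)`. -/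
noncomputable def basisA : Module.Basis (Fin 12) k (FK3 k) :=
  Module.Basis.mk (linearIndependent_e k) (span_e k)

@[simp] lemma basisA_apply (u : Fin 12) : basisA k u = e k u := Module.Basis.mk_apply _ _ _

end Basis

section Frames

/-- A family `φ` which restricts to a basis on the valid indices and vanishes elsewhere. -/
structure Frame (k : Type) [Field k] {M : Type} [AddCommGroup M] [Module k M] (φ : ℕ → M)
    (valid : ℕ → Bool) : Prop where
  exists_map : ∀ {N : Type} [AddCommGroup N] [Module k N] (g : ℕ → N),
    ∃ f : M →ₗ[k] N, ∀ n, valid n = true → f (φ n) = g n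
  ext : ∀ {N : Type} [AddCommGroup N] [Module k N] {f g : M →ₗ[k] N},
    (∀ n, valid n = true → f (φ n) = g (φ n)) → f = g
  zero : ∀ n, valid n = false → φ n = 0

variable {k : Type} [Field k] {M N : Type} [AddCommGroup M] [Module k M] [AddCommGroup N]
  [Module k N]

lemma Frame.of_basis {ι : Type} (b : Module.Basis ι k M) {key : ι → ℕ} {φ : ℕ → M} {valid : ℕ → Bool}
    (hφ : ∀ i, φ (key i) = b i)
    (hvalid : ∀ n, valid n = true → ∃ i, key i = n) (h0 : ∀ n, valid n = false → φ n = 0) :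
    Frame k φ valid where
  exists_map g := by
    refine ⟨b.constr k (g ∘ key), fun n hn => ?_⟩
    obtain ⟨i, rfl⟩ := hvalid n hn
    rw [hφ, b.constr_basis, Function.comp_apply]
  ext := by
    intro N _ _ f g h
    refine b.ext fun i => ?_
    rw [← hφ]
    by_cases hv : valid (key i) = true
    · exact h _ hv
    · rw [h0 _ (Bool.not_eq_true _ ▸ hv), map_zero, map_zero]
  zero := h0

/-- Restriction of a table to the valid indices. -/
def guard (valid : ℕ → Bool) (T : ℕ → List (ℕ × ℤ)) (n : ℕ) : List (ℕ × ℤ) :=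
  bif valid n then T n else []

lemma Frame.exists_table {φ : ℕ → M} {valid : ℕ → Bool} (h : Frame k φ valid) (ψ : ℕ → N)
    (T : ℕ → List (ℕ × ℤ)) :
    ∃ f : M →ₗ[k] N, ∀ n, f (φ n) = ev ψ (guard valid T n) := by
  obtain ⟨f, hf⟩ := h.exists_map fun n => ev ψ (T n)
  refine ⟨f, fun n => ?_⟩
  cases hv : valid n
  · rw [h.zero n hv, map_zero, guard, hv, cond_false, ev_nil]
  · rw [hf n hv, guard, hv, cond_true]

/-- Whether `p` holds below `n`. -/
def allBelow (p : ℕ → Bool) : ℕ → Bool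
  | 0 => true
  | n + 1 => p n && allBelow p n

lemma allBelow_iff {p : ℕ → Bool} {n : ℕ} : allBelow p n = true ↔ ∀ i < n, p i = true := by
  induction n with
  | zero => simp [allBelow]
  | succ n ih =>
    rw [allBelow, Bool.and_eq_true, ih]
    refine ⟨fun h i hi => ?_, fun h => ⟨h n n.lt_succ_self, fun i hi => h i (hi.trans n.lt_succ_self)⟩⟩
    rcases Nat.lt_succ_iff_lt_or_eq.1 hi with hi | rfl
    exacts [h.2 i hi, h.1]

/-- Whether a table vanishes on the valid indices below `bound`. -/
def checkZero (valid : ℕ → Bool) (bound fuel : ℕ) (T : ℕ → List (ℕ × ℤ)) : Bool :=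
  allBelow (fun n => !valid n || isZero fuel (T n)) bound

lemma Frame.eq_zero {φ : ℕ → M} {valid : ℕ → Bool} (h : Frame k φ valid) {bound fuel : ℕ}
    (hb : ∀ n, valid n = true → n < bound) {f : M →ₗ[k] N} {ψ : ℕ → N} {T : ℕ → List (ℕ × ℤ)}
    (hf : ∀ n, valid n = true → f (φ n) = ev ψ (T n))
    (hT : checkZero valid bound fuel T = true) : f = 0 := by
  refine h.ext fun n hn => ?_
  have := allBelow_iff.1 hT n (hb n hn)
  rw [hn, Bool.not_true, Bool.false_or] at this
  rw [hf n hn, ev_eq_zero fuel _ this, LinearMap.zero_apply]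

end Frames

section Model

/-- An algebra `R` and an `R`-module `A` with bases multiplying as in the enveloping algebra of
`FK(3)` and in `FK(3)`. -/
structure Model (k R A : Type) [Field k] [Ring R] [Algebra k R] [AddCommGroup A] [Module k A]
    [Module R A] where
  e : ℕ → A
  ee : ℕ → ℕ → R
  basisA : Module.Basis (Fin 12) k A
  basisA_apply : ∀ u, basisA u = e u
  e_of_le : ∀ {u}, 12 ≤ u → e u = 0
  basisR : Module.Basis (Fin 12 × Fin 12) k R
  basisR_apply : ∀ p, basisR p = ee p.1 p.2
  ee_of_le_left : ∀ {u}, 12 ≤ u → ∀ v, ee u v = 0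
  ee_of_le_right : ∀ {v}, 12 ≤ v → ∀ u, ee u v = 0
  one : ee 0 0 = 1
  mul : ∀ u v x y, ee u v * ee x y = ev (fun a => ev (fun b => ee a b) (tmul y v)) (tmul u x)
  smul : ∀ u v w, ee u v • e w = ev e (lin (fun t => tmul t v) (tmul u w))

/-- The valid indices for `Model.kap`. -/
def validK (r n : ℕ) : Bool :=
  Nat.blt (n / 256) r && Nat.blt (n / 16 % 16) 12 && Nat.blt (n % 16) 12

/-- The valid indices for `Model.nu`. -/
def validV (r n : ℕ) : Bool := Nat.blt (n / 16) r && Nat.blt (n % 16) 12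

lemma validK_iff {r n : ℕ} :
    validK r n = true ↔ n / 256 < r ∧ n / 16 % 16 < 12 ∧ n % 16 < 12 := by
  simp only [validK, Bool.and_eq_true, Nat.blt_eq, and_assoc]

lemma validV_iff {r n : ℕ} : validV r n = true ↔ n / 16 < r ∧ n % 16 < 12 := by
  simp only [validV, Bool.and_eq_true, Nat.blt_eq]

lemma lt_of_validK {r n : ℕ} (h : validK r n = true) : n < 256 * r := by
  have := (validK_iff.1 h).1
  omega

lemma lt_of_validV {r n : ℕ} (h : validV r n = true) : n < 16 * r := by
  have := (validV_iff.1 h).1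
  omega

namespace Model

variable {k R A : Type} [Field k] [Ring R] [Algebra k R] [AddCommGroup A] [Module k A] [Module R A]
  (m : Model k R A)

/-- The standard vectors of the free module of rank `r`; the index `256 g + 16 u + v` stands for
`e u ⊗ e v` times the `g`-th generator. -/
def kap (r n : ℕ) : Fin r → R :=
  fun j => if (j : ℕ) = n / 256 then m.ee (n / 16 % 16) (n % 16) else 0

/-- The standard vectors of `Aʳ`; the index `16 g + w` stands for `e w` in the `g`-th place. -/
def nu (r n : ℕ) : Fin r → A :=
  fun j => if (j : ℕ) = n / 16 then m.e (n % 16) else 0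

lemma frame_kap (r : ℕ) : Frame k (m.kap r) (validK r) := by
  refine Frame.of_basis (Pi.basis fun _ : Fin r => m.basisR)
    (key := fun s => 256 * s.1 + 16 * s.2.1 + s.2.2) ?_ ?_ ?_
  · rintro ⟨g, u, v⟩
    ext1 j
    rw [Pi.basis_apply, m.basisR_apply, kap]
    have h1 : (256 * (g : ℕ) + 16 * u + v) / 256 = g := by omega
    have h2 : (256 * (g : ℕ) + 16 * u + v) / 16 % 16 = u := by omega
    have h3 : (256 * (g : ℕ) + 16 * u + v) % 16 = v := by omega
    simp only [h1, h2, h3, Pi.single_apply, Fin.ext_iff]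
  · intro n hn
    obtain ⟨h1, h2, h3⟩ := validK_iff.1 hn
    refine ⟨⟨⟨_, h1⟩, ⟨_, h2⟩, ⟨_, h3⟩⟩, ?_⟩
    simp only
    omega
  · intro n hn
    have h : ¬ (n / 256 < r ∧ n / 16 % 16 < 12 ∧ n % 16 < 12) := by
      rw [← validK_iff, hn]; simp
    ext1 j
    rw [kap, Pi.zero_apply, ite_eq_right_iff]
    intro hj
    by_cases hu : n / 16 % 16 < 12
    · exact m.ee_of_le_right (by have := j.2; omega) _
    · exact m.ee_of_le_left (not_lt.1 hu) _

lemma frame_nu (r : ℕ) : Frame k (m.nu r) (validV r) := by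
  refine Frame.of_basis (Pi.basis fun _ : Fin r => m.basisA)
    (key := fun s => 16 * s.1 + s.2) ?_ ?_ ?_
  · rintro ⟨g, u⟩
    ext1 j
    rw [Pi.basis_apply, m.basisA_apply, nu]
    have h1 : (16 * (g : ℕ) + u) / 16 = g := by omega
    have h2 : (16 * (g : ℕ) + u) % 16 = u := by omega
    simp only [h1, h2, Pi.single_apply, Fin.ext_iff]
  · intro n hn
    obtain ⟨h1, h2⟩ := validV_iff.1 hn
    refine ⟨⟨⟨_, h1⟩, ⟨_, h2⟩⟩, ?_⟩
    simp only
    omega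
  · intro n hn
    have h : ¬ (n / 16 < r ∧ n % 16 < 12) := by rw [← validV_iff, hn]; simp
    ext1 j
    rw [nu, Pi.zero_apply, ite_eq_right_iff]
    intro hj
    exact m.e_of_le (by have := j.2; omega)

end Model

end Model

section Concrete

variable (k : Type) [Field k]

instance : IsScalarTower k (FKAe k) (FK3 k) where
  smul_assoc c x m := by
    induction x using TensorProduct.induction_on with
    | zero =>
      have h : (0 : FKAe k) • m = 0 := zero_smul (FKAe k) m
      rw [smul_zero, h, smul_zero]
    | tmul a b =>
      rw [TensorProduct.smul_tmul', TensorProduct.Algebra.smul_def, TensorProduct.Algebra.smul_def,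
        smul_assoc]
    | add x y hx hy => rw [smul_add, add_smul, add_smul, hx, hy, smul_add]

/-- The element `e u ⊗ e v` of the enveloping algebra. -/
noncomputable def ee (u v : ℕ) : FKAe k := e k u ⊗ₜ[k] MulOpposite.op (e k v)

lemma ev_tmul_ev {S M N : Type*} [CommRing S] [AddCommGroup M] [Module S M] [AddCommGroup N]
    [Module S N] (φ : ℕ → M) (ψ : ℕ → N) (L L' : List (ℕ × ℤ)) :
    ev φ L ⊗ₜ[S] ev ψ L' = ev (fun a => ev (fun b => φ a ⊗ₜ[S] ψ b) L') L := by
  have h (a : ℕ) : ev (fun b => φ a ⊗ₜ[S] ψ b) L' = φ a ⊗ₜ[S] ev ψ L' :=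
    (map_ev (TensorProduct.mk S M N (φ a)) ψ L').symm
  simp only [h]
  exact map_ev ((TensorProduct.mk S M N).flip (ev ψ L')) φ L

lemma ev_tmul_op_ev (L L' : List (ℕ × ℤ)) :
    ev (e k) L ⊗ₜ[k] MulOpposite.op (ev (e k) L') =
      ev (fun a => ev (fun b => ee k a b) L') L := by
  have h : MulOpposite.op (ev (e k) L') = ev (fun b => MulOpposite.op (e k b)) L' :=
    map_ev (MulOpposite.opAddEquiv : FK3 k ≃+ (FK3 k)ᵐᵒᵖ) _ _
  rw [h]
  exact ev_tmul_ev _ _ _ _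

/-- The enveloping algebra of `FK(3)`, acting on `FK(3)`. -/
noncomputable def model : Model k (FKAe k) (FK3 k) where
  e := e k
  ee := ee k
  basisA := basisA k
  basisA_apply := basisA_apply k
  e_of_le h := e_of_le k h
  basisR := (basisA k).tensorProduct ((basisA k).map (MulOpposite.opLinearEquiv k))
  basisR_apply p := by simp [ee, Module.Basis.tensorProduct_apply']
  ee_of_le_left h v := by rw [ee, e_of_le k h, TensorProduct.zero_tmul]
  ee_of_le_right h u := by rw [ee, e_of_le k h, MulOpposite.op_zero, TensorProduct.tmul_zero]
  one := rfl
  mul u v x y := by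
    rw [ee, ee, Algebra.TensorProduct.tmul_mul_tmul, ← MulOpposite.op_mul, e_mul_e, e_mul_e,
      ev_tmul_op_ev]
  smul u v w := by
    rw [ee, TensorProduct.Algebra.smul_def, ← map_ev_lin (φ := e k)
      (AddMonoidHom.mulRight (e k v)) (fun t => e_mul_e k t v), ← e_mul_e]
    exact (mul_assoc _ _ _).symm

end Concrete

section Rows

/-- Translation of all indices by `n`. -/
def shift (n : ℕ) : List (ℕ × ℤ) → List (ℕ × ℤ)
  | [] => []
  | p :: L => (Nat.add n p.1, p.2) :: shift n L

/-- The concatenation of the lists `F 0, …, F (n - 1)`. -/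
def upTo (F : ℕ → List (ℕ × ℤ)) : ℕ → List (ℕ × ℤ)
  | 0 => []
  | n + 1 => upTo F n ++ F n

/-- The `h`-th generator multiplied by the tensor product of two formal combinations. -/
def tens (h : ℕ) (L K : List (ℕ × ℤ)) : List (ℕ × ℤ) :=
  lin (fun u => shift (256 * h + 16 * u) K) L

/-- The product of `e u ⊗ e v` and a standard vector of a free module. -/
def act (u v n : ℕ) : List (ℕ × ℤ) := tens (n / 256) (tmul u (n / 16 % 16)) (tmul (n % 16) v)

/-- The action on standard vectors of the linear map of free modules given by `rows`. -/
def mapT (rows : List (List (ℕ × ℤ))) (n : ℕ) : List (ℕ × ℤ) :=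
  lin (act (n / 16 % 16) (n % 16)) (rows.getD (n / 256) [])

/-- The action on standard vectors of `Aʳ` of the transposed map. -/
def dualT (r : ℕ) (rows : List (List (ℕ × ℤ))) (n : ℕ) : List (ℕ × ℤ) :=
  upTo (fun g => shift (16 * g) (lin (fun m => bif Nat.beq (m / 256) (n / 16) then
    lin (fun t => tmul t (m % 16)) (tmul (m / 16 % 16) (n % 16)) else []) (rows.getD g []))) r

section

variable {M : Type*} [AddCommGroup M]

lemma ev_shift (φ : ℕ → M) (n : ℕ) (L : List (ℕ × ℤ)) :
    ev φ (shift n L) = ev (fun i => φ (n + i)) L := by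
  induction L with
  | nil => rfl
  | cons p L ih => rw [shift, ev_cons, ev_cons, ih]; rfl

lemma ev_congr {φ ψ : ℕ → M} {L : List (ℕ × ℤ)} (h : ∀ p ∈ L, φ p.1 = ψ p.1) :
    ev φ L = ev ψ L := by
  induction L with
  | nil => rfl
  | cons p L ih =>
    rw [ev_cons, ev_cons, h p List.mem_cons_self, ih fun q hq => h q (List.mem_cons_of_mem _ hq)]

lemma ev_zero (L : List (ℕ × ℤ)) : ev (fun _ => (0 : M)) L = 0 := by
  induction L with
  | nil => rfl
  | cons p L ih => rw [ev_cons, ih, smul_zero, add_zero]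

lemma ev_apply {ι : Type*} (φ : ℕ → ι → M) (L : List (ℕ × ℤ)) (j : ι) :
    ev φ L j = ev (fun i => φ i j) L :=
  map_ev (Pi.evalAddMonoidHom (fun _ => M) j) φ L

end

lemma tmul_lt (u v : ℕ) : ∀ p ∈ tmul u v, p.1 < 16 := by
  by_cases hu : u < 12
  · by_cases hv : v < 12
    · have h : ∀ u < 12, ∀ v < 12, ∀ p ∈ tmul u v, p.1 < 16 := by decide +kernel
      exact h u hu v hv
    · simp [tmul_of_le_right u (not_lt.1 hv)]
  · simp [tmul_of_le_left (not_lt.1 hu)]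

lemma scale_lt {b : ℕ} {c : ℤ} {L : List (ℕ × ℤ)} (h : ∀ p ∈ L, p.1 < b) :
    ∀ p ∈ scale c L, p.1 < b := by
  induction L with
  | nil => simp [scale]
  | cons q L ih =>
    rw [scale, List.forall_mem_cons]
    exact ⟨h q List.mem_cons_self, ih fun p hp => h p (List.mem_cons_of_mem _ hp)⟩

lemma lin_lt {b : ℕ} {T : ℕ → List (ℕ × ℤ)} (h : ∀ i, ∀ p ∈ T i, p.1 < b)
    (L : List (ℕ × ℤ)) : ∀ p ∈ lin T L, p.1 < b := by
  induction L with
  | nil => simp [lin]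
  | cons q L ih =>
    rw [lin, List.forall_mem_append]
    exact ⟨scale_lt (h _), ih⟩

namespace Model

variable {k R A : Type} [Field k] [Ring R] [Algebra k R] [AddCommGroup A] [Module k A] [Module R A]
  (m : Model k R A)

lemma ev_kap_tens (r h : ℕ) {L L' : List (ℕ × ℤ)} (hL : ∀ p ∈ L, p.1 < 16)
    (hL' : ∀ p ∈ L', p.1 < 16) (j : Fin r) :
    ev (m.kap r) (tens h L L') j =
      if (j : ℕ) = h then ev (fun a => ev (fun b => m.ee a b) L') L else 0 := by
  rw [tens, ev_lin, ev_apply]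
  have key : ∀ p ∈ L, ev (m.kap r) (shift (256 * h + 16 * p.1) L') j =
      if (j : ℕ) = h then ev (fun b => m.ee p.1 b) L' else 0 := by
    intro p hp
    have hp' := hL p hp
    rw [ev_shift, ev_apply]
    split_ifs with hj
    · refine ev_congr fun q hq => ?_
      have hq' := hL' q hq
      have h1 : (256 * h + 16 * p.1 + q.1) / 256 = h := by omega
      have h2 : (256 * h + 16 * p.1 + q.1) / 16 % 16 = p.1 := by omega
      have h3 : (256 * h + 16 * p.1 + q.1) % 16 = q.1 := by omega
      rw [kap, h1, h2, h3, if_pos hj]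
    · rw [← ev_zero L']
      refine ev_congr fun q hq => ?_
      have hq' := hL' q hq
      have h1 : (256 * h + 16 * p.1 + q.1) / 256 = h := by omega
      rw [kap, h1, if_neg hj]
  rw [ev_congr (ψ := fun a => if (j : ℕ) = h then ev (fun b => m.ee a b) L' else 0) key]
  split_ifs
  · rfl
  · exact ev_zero L

lemma ee_smul_kap (r u v n : ℕ) : m.ee u v • m.kap r n = ev (m.kap r) (act u v n) := by
  ext1 j
  rw [act, m.ev_kap_tens r _ (tmul_lt _ _) (tmul_lt _ _), Pi.smul_apply, smul_eq_mul, kap]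
  split_ifs
  · exact m.mul _ _ _ _
  · exact mul_zero _

lemma kap_eq_single (r n : ℕ) (h : n / 256 < r) :
    m.kap r n = Pi.single ⟨n / 256, h⟩ (m.ee (n / 16 % 16) (n % 16)) := by
  ext1 j
  simp only [kap, Pi.single_apply, Fin.ext_iff]

lemma kap_of_le (r n : ℕ) (h : r ≤ n / 256) : m.kap r n = 0 := by
  ext1 j
  rw [kap, if_neg (by omega), Pi.zero_apply]

/-- The linear map of free modules given by `rows`. -/
noncomputable def mapR (r r' : ℕ) (rows : List (List (ℕ × ℤ))) :
    (Fin r → R) →ₗ[R] (Fin r' → R) :=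
  Fintype.linearCombination (R) fun g : Fin r => ev (m.kap r') (rows.getD g [])

lemma mapR_single (r r' : ℕ) (rows : List (List (ℕ × ℤ))) (g : Fin r) (x : R) :
    m.mapR r r' rows (Pi.single g x) = x • ev (m.kap r') (rows.getD g []) :=
  Fintype.linearCombination_apply_single _ _ _ _

lemma mapR_kap {r : ℕ} (r' : ℕ) {rows : List (List (ℕ × ℤ))} (hr : rows.length ≤ r) (n : ℕ) :
    m.mapR r r' rows (m.kap r n) = ev (m.kap r') (mapT rows n) := by
  by_cases h : n / 256 < r
  · rw [m.kap_eq_single r n h, m.mapR_single, mapT]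
    exact map_ev_lin (DistribSMul.toAddMonoidHom (Fin r' → R) (m.ee (n / 16 % 16) (n % 16)))
      (m.ee_smul_kap r' _ _) _
  · rw [m.kap_of_le r n (not_lt.1 h), map_zero, mapT,
      List.getD_eq_default _ _ (hr.trans (not_lt.1 h)), lin, ev_nil]

lemma linearMap_ext_single {r : ℕ} {M : Type} [AddCommGroup M] [Module (R) M]
    {f g : (Fin r → R) →ₗ[R] M}
    (h : ∀ i : Fin r, f (Pi.single i 1) = g (Pi.single i 1)) : f = g := by
  refine LinearMap.pi_ext' fun i => LinearMap.ext_ring ?_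
  exact h i

/-- Whether the composite of two maps of free modules vanishes. -/
def compZero (r : ℕ) (G F : List (List (ℕ × ℤ))) : Bool :=
  allBelow (fun g => isZero 11 (lin (mapT F) (G.getD g []))) r

/-- Whether the sum of two composites of maps of free modules vanishes. -/
def compAddZero (r : ℕ) (G F G' F' : List (List (ℕ × ℤ))) : Bool :=
  allBelow (fun g => isZero 11 (lin (mapT F) (G.getD g []) ++ lin (mapT F') (G'.getD g []))) r

lemma mapR_mapR_single (r : ℕ) {r' : ℕ} (r'' : ℕ) {F : List (List (ℕ × ℤ))} (hF : F.length ≤ r')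
    (G : List (List (ℕ × ℤ))) (g : Fin r) :
    m.mapR r' r'' F (m.mapR r r' G (Pi.single g 1)) =
      ev (m.kap r'') (lin (mapT F) (G.getD g [])) := by
  rw [m.mapR_single, one_smul]
  exact map_ev_lin (m.mapR r' r'' F) (m.mapR_kap r'' hF) _

lemma mapR_comp_eq_zero {r r' r'' : ℕ} {G F : List (List (ℕ × ℤ))} (hF : F.length ≤ r')
    (h : compZero r G F = true) (x : Fin r → R) :
    m.mapR r' r'' F (m.mapR r r' G x) = 0 := by
  have key : (m.mapR r' r'' F).comp (m.mapR r r' G) = 0 := by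
    refine linearMap_ext_single fun i => ?_
    rw [LinearMap.comp_apply, m.mapR_mapR_single r r'' hF,
      ev_eq_zero 11 _ (allBelow_iff.1 h i i.2), LinearMap.zero_apply]
  exact LinearMap.congr_fun key x

lemma mapR_comp_add_eq_zero {r r' s r'' : ℕ} {G F G' F' : List (List (ℕ × ℤ))}
    (hF : F.length ≤ r') (hF' : F'.length ≤ s) (h : compAddZero r G F G' F' = true)
    (x : Fin r → R) :
    m.mapR r' r'' F (m.mapR r r' G x) + m.mapR s r'' F' (m.mapR r s G' x) = 0 := by
  have key : (m.mapR r' r'' F).comp (m.mapR r r' G) +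
      (m.mapR s r'' F').comp (m.mapR r s G') = 0 := by
    refine linearMap_ext_single fun i => ?_
    rw [LinearMap.add_apply, LinearMap.comp_apply, LinearMap.comp_apply,
      m.mapR_mapR_single r r'' hF, m.mapR_mapR_single r r'' hF', ← ev_append,
      ev_eq_zero 11 _ (allBelow_iff.1 h i i.2), LinearMap.zero_apply]
  exact LinearMap.congr_fun key x

/-- The map `Aʳ' → Aʳ` induced on `Hom(-, A)` by the map of free modules given by `rows`. -/
noncomputable def dualR [IsScalarTower k R A] (r r' : ℕ) (rows : List (List (ℕ × ℤ))) :
    (Fin r' → A) →ₗ[k] (Fin r → A) where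
  toFun φ g := ∑ h, ev (m.kap r') (rows.getD g []) h • φ h
  map_add' φ ψ := by
    ext1 g
    simp only [Pi.add_apply, smul_add, Finset.sum_add_distrib]
  map_smul' c φ := by
    ext1 g
    simp only [Pi.smul_apply, RingHom.id_apply, Finset.smul_sum]
    exact Finset.sum_congr rfl fun h _ => smul_comm _ _ _

lemma ev_upTo_nu (r n : ℕ) (F : ℕ → List (ℕ × ℤ)) (hF : ∀ g, ∀ p ∈ F g, p.1 < 16) (j : Fin r) :
    ev (m.nu r) (upTo (fun g => shift (16 * g) (F g)) n) j =
      if (j : ℕ) < n then ev (m.e) (F j) else 0 := by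
  have key (g : ℕ) : ev (m.nu r) (shift (16 * g) (F g)) j =
      if (j : ℕ) = g then ev (m.e) (F j) else 0 := by
    rw [ev_shift, ev_apply]
    have h1 : ∀ p ∈ F g, (16 * g + p.1) / 16 = g := fun p hp => by have := hF g p hp; omega
    split_ifs with hj
    · rw [hj]
      refine ev_congr fun p hp => ?_
      have h2 : (16 * g + p.1) % 16 = p.1 := by have := hF g p hp; omega
      rw [nu, h1 p hp, if_pos hj, h2]
    · rw [← ev_zero (F g)]
      exact ev_congr fun p hp => by rw [nu, h1 p hp, if_neg hj]
  induction n with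
  | zero => simp [upTo]
  | succ n ih =>
    rw [upTo, ev_append, Pi.add_apply, ih, key]
    rcases lt_trichotomy (j : ℕ) n with h | h | h
    · rw [if_pos h, if_neg (by omega), if_pos (by omega), add_zero]
    · rw [if_neg (by omega), if_pos h, if_pos (by omega), zero_add]
    · rw [if_neg (by omega), if_neg (by omega), if_neg (by omega), add_zero]

lemma sum_kap_smul_nu {r n : ℕ} (hn : n / 16 < r) (i : ℕ) :
    ∑ h, m.kap r i h • m.nu r n h = ev m.e (bif Nat.beq (i / 256) (n / 16) then
      lin (fun t => tmul t (i % 16)) (tmul (i / 16 % 16) (n % 16)) else []) := by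
  rw [Finset.sum_eq_single ⟨n / 16, hn⟩]
  · rw [nu, if_pos rfl, kap]
    by_cases h : i / 256 = n / 16
    · rw [if_pos h.symm, m.smul, h, Nat.beq_refl, cond_true]
    · have hb : Nat.beq (i / 256) (n / 16) = false := by
        rw [← Bool.not_eq_true, Nat.beq_eq]; exact h
      rw [if_neg (Ne.symm h), zero_smul, hb, cond_false, ev_nil]
  · intro h _ hh
    rw [nu, if_neg fun h' => hh (Fin.ext h'), smul_zero]
  · simp

lemma dualR_nu [IsScalarTower k R A] (r r' : ℕ) (rows : List (List (ℕ × ℤ))) (n : ℕ) :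
    m.dualR r r' rows (m.nu r' n) = ev (m.nu r) (guard (validV r') (dualT r rows) n) := by
  cases hv : validV r' n
  · rw [(m.frame_nu r').zero n hv, map_zero, guard, hv, cond_false, ev_nil]
  · have hn := (validV_iff.1 hv).1
    rw [guard, hv, cond_true]
    ext1 j
    rw [dualT, m.ev_upTo_nu, if_pos j.2, ev_lin]
    · simp only [← m.sum_kap_smul_nu hn]
      exact map_ev (Fintype.linearCombination R (m.nu r' n)) (m.kap r') (rows.getD j [])
    · refine fun g => lin_lt (fun i => ?_) _
      cases Nat.beq (i / 256) (n / 16)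
      · simp
      · exact lin_lt (fun t => tmul_lt _ _) _

end Model

end Rows

section Tables

/-- A description of the kernel of a linear map by linear maps `ker` into it and `inv` such that
`ker` composed with the projection to the `free` coordinates, plus `inv` composed with the given
map, is multiplication by `scalar`. -/
structure KernelData where
  scalar : ℤ
  free : List ℕ
  ker : List (List (ℕ × ℤ))
  inv : List (List (List (ℕ × ℤ)))

/-- The differential of the Koszul complex in degree 1. -/
def d₁ : List (List (ℕ × ℤ)) :=
  [[(1, -1), (16, 1)], [(2, -1), (32, 1)], [(3, -1), (48, 1)]]

/-- The differential of the Koszul complex in degree 2. -/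
def d₂ : List (List (ℕ × ℤ)) :=
  [[(1, 1), (16, 1)], [(258, 1), (288, 1)], [(515, 1), (560, 1)], [(2, 1), (48, 1), (259, 1),
  (272, 1), (513, 1), (544, 1)], [(3, 1), (32, 1), (257, 1), (304, 1), (514, 1), (528, 1)]]

/-- The differential of the Koszul complex in degree 3. -/
def d₃ : List (List (ℕ × ℤ)) :=
  [[(1, -1), (16, 1)], [(258, -1), (288, 1)], [(515, -1), (560, 1)], [(1, -1), (2, -1), (3, -1),
  (16, 1), (32, 1), (48, 1), (257, -1), (258, -1), (259, -1), (272, 1), (288, 1), (304, 1), (513,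
  -1), (514, -1), (515, -1), (528, 1), (544, 1), (560, 1), (769, -1), (770, -1), (771, -1), (784,
  1), (800, 1), (816, 1), (1025, -1), (1026, -1), (1027, -1), (1040, 1), (1056, 1), (1072, 1)],
  [(1, -1), (2, 1), (16, 1), (32, -1), (257, -1), (258, 1), (272, 1), (288, -1), (513, -1), (514,
  1), (528, 1), (544, -1), (770, -1), (771, 1), (784, -1), (816, 1), (1025, 1), (1027, -1), (1056,
  1), (1072, -1)], [(2, -1), (3, 1), (32, 1), (48, -1), (258, -1), (259, 1), (288, 1), (304, -1),
  (514, -1), (515, 1), (544, 1), (560, -1), (769, 1), (771, -1), (784, 1), (800, -1), (1025, -1),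
  (1026, 1), (1040, -1), (1072, 1)]]

/-- The differential of the Koszul complex in even degrees at least four. -/
def dEven : List (List (ℕ × ℤ)) :=
  [[(1, 1), (16, 1)], [(258, 1), (288, 1)], [(515, 1), (560, 1)], [(769, 1), (770, 1), (771, 1),
  (784, 1), (800, 1), (816, 1)], [(1025, -1), (1026, 1), (1040, -1), (1072, 1), (1281, -1), (1283,
  1), (1312, -1), (1328, 1)], [(1025, -1), (1027, 1), (1040, -1), (1056, 1), (1282, -1), (1283,
  1), (1296, -1), (1328, 1)]]

/-- The differential of the Koszul complex in odd degrees at least four. -/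
def dOdd : List (List (ℕ × ℤ)) :=
  [[(1, -1), (16, 1)], [(258, -1), (288, 1)], [(515, -1), (560, 1)], [(769, -1), (770, -1), (771,
  -1), (784, 1), (800, 1), (816, 1)], [(1026, -1), (1027, 1), (1040, -1), (1072, 1), (1281, 1),
  (1283, -1), (1312, 1), (1328, -1)], [(1025, 1), (1027, -1), (1040, 1), (1056, -1), (1281, -1),
  (1282, 1), (1296, -1), (1328, 1)]]

/-- The connecting map from the Koszul complex to its shift in degree 0. -/
def f₀ : List (List (ℕ × ℤ)) :=
  [[(8, -9), (9, 9), (10, -18), (21, 9), (22, -9), (23, -9), (36, 18), (37, 18), (39, 9), (52, 9),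
  (54, -18), (66, -9), (67, -18), (81, 9), (82, -9), (97, -9), (99, 9), (113, -9), (114, -18),
  (128, -9), (144, 9), (160, -18), (264, -9), (265, -18), (266, 9), (277, 9), (278, 18), (279,
  18), (292, -9), (293, -9), (295, 9), (308, -18), (310, 9), (322, -9), (323, 9), (337, -18),
  (338, -9), (353, -9), (355, -18), (369, -9), (370, 9), (384, -9), (400, -18), (416, 9), (520,
  18), (521, 9), (522, 9), (533, -18), (534, -9), (535, -9), (548, -9), (549, -9), (551, -18),
  (564, 9), (566, 9), (578, 18), (579, 9), (593, 9), (594, 18), (609, 18), (611, 9), (625, 18),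
  (626, 9), (640, 18), (656, 9), (672, 9), (776, -2), (777, 2), (778, 2), (788, -3), (789, -1),
  (790, 1), (791, -2), (804, 1), (805, -2), (806, -3), (807, -1), (820, 2), (821, 3), (822, 2),
  (823, 3), (833, 3), (834, -2), (835, -1), (849, 2), (850, 1), (851, -3), (865, -2), (866, 3),
  (867, -1), (881, 1), (882, 2), (883, -3), (896, -2), (912, 2), (928, 2), (1032, 2), (1033, -2),
  (1034, 4), (1045, 2), (1046, -2), (1047, -2), (1061, -4), (1062, 4), (1063, -2), (1076, -6),
  (1077, -4), (1078, 4), (1079, 4), (1090, 6), (1105, 2), (1106, 2), (1107, -4), (1121, -2),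
  (1122, 4), (1123, -2), (1137, -2), (1138, 4), (1139, 4), (1152, 2), (1168, -2), (1184, 4),
  (1288, 4), (1289, 2), (1290, 2), (1300, 4), (1302, -2), (1303, -6), (1316, -2), (1317, -6),
  (1318, 4), (1332, -2), (1334, -2), (1345, 4), (1346, 4), (1347, -2), (1361, 6), (1377, 4),
  (1378, 4), (1379, -2), (1394, 6), (1408, 4), (1424, 2), (1440, 2)]]

/-- The connecting map from the Koszul complex to its shift in degree 1. -/
def f₁ : List (List (ℕ × ℤ)) :=
  [[(10, 18), (36, -18), (37, -9), (54, 9), (55, -9), (67, -18), (83, -9), (98, 9), (114, -9),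
  (160, -18), (265, -9), (278, 18), (279, -9), (308, -18), (309, -18), (321, -27), (337, -9),
  (371, -18), (400, 9), (520, 9), (532, -27), (533, -18), (550, 18), (578, -18), (609, 9), (625,
  -18), (640, -9), (776, 1), (777, -1), (788, -2), (789, -1), (790, 1), (791, -1), (804, 2), (805,
  2), (822, -2), (833, -2), (835, 2), (849, -1), (865, 1), (881, -1), (882, 2), (896, -1), (912,
  1), (1033, -2), (1044, -2), (1045, -2), (1046, -2), (1047, -2), (1060, 2), (1061, 2), (1078, 4),
  (1089, -2), (1091, 2), (1121, 2), (1137, 2), (1138, -4), (1152, -2), (1288, 2), (1301, 2),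
  (1302, 2), (1316, -4), (1317, -4), (1334, -2), (1347, -4), (1361, -2), (1393, -2), (1394, 2),
  (1424, 2)], [(10, -9), (36, 18), (37, -9), (54, -18), (55, -18), (83, -18), (98, -27), (114,
  -9), (160, 9), (265, 18), (278, -18), (279, -9), (308, 9), (309, -9), (321, 9), (337, -9), (355,
  -18), (371, -9), (400, -18), (520, 9), (532, 18), (550, -27), (551, -18), (578, 9), (594, -18),
  (609, -18), (640, -9), (776, 1), (778, -1), (790, 2), (791, 2), (804, 1), (805, -1), (806, -2),
  (807, -1), (820, -2), (834, 1), (849, 2), (850, -1), (866, -2), (867, 2), (882, -1), (896, -1),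
  (928, 1), (1032, 2), (1046, -4), (1047, -4), (1060, 2), (1063, 2), (1076, -2), (1105, 2), (1106,
  -2), (1123, -4), (1138, -2), (1184, 2), (1290, -2), (1302, 2), (1303, 2), (1316, -2), (1317,
  -2), (1318, -2), (1319, -2), (1332, 4), (1346, 2), (1361, -4), (1362, 2), (1378, -2), (1379, 2),
  (1408, -2)], [(10, -9), (37, 18), (54, 9), (55, 27), (67, 18), (83, 27), (98, 18), (114, 18),
  (160, 9), (265, -9), (279, 18), (308, 9), (309, 27), (321, 18), (337, 18), (355, 18), (371, 27),
  (400, 9), (520, -18), (532, 9), (533, 18), (550, 9), (551, 18), (578, 9), (594, 18), (609, 9),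
  (625, 18), (640, 18), (777, -1), (778, -1), (789, -2), (807, -2), (820, 1), (821, 2), (822, 1),
  (823, 2), (834, -2), (835, 1), (850, -2), (851, 2), (865, -2), (867, 1), (881, -2), (883, 2),
  (912, 1), (928, 1), (1034, -2), (1045, -2), (1063, 4), (1077, 2), (1078, 2), (1090, -2), (1091,
  2), (1106, -2), (1107, 2), (1121, 4), (1123, -2), (1137, 4), (1168, 2), (1289, -2), (1301, 4),
  (1319, -2), (1332, 2), (1335, 2), (1346, 4), (1347, -2), (1362, 4), (1377, -2), (1379, 2),
  (1393, -2), (1395, 2), (1440, 2)]]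

/-- The connecting map from the Koszul complex to its shift in degree 2. -/
def f₂ : List (List (ℕ × ℤ)) :=
  [[(10, -18), (38, -9), (39, 9), (52, 18), (53, 9), (66, -18), (82, -9), (99, 9), (115, -9),
  (160, -18)], [(265, -18), (276, -9), (277, 9), (310, 18), (311, 9), (323, 9), (339, -9), (353,
  -18), (369, -9), (400, -18)], [(520, 18), (534, -9), (535, -18), (548, -9), (549, -18), (577,
  9), (593, 18), (610, 9), (626, 18), (640, 18)], [(8, 9), (9, 9), (10, 9), (21, 9), (22, 9), (23,
  9), (37, 18), (38, -18), (39, -9), (52, -27), (53, -27), (54, 18), (55, 18), (66, 27), (81, 9),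
  (83, 18), (97, 9), (98, 18), (99, -9), (113, 9), (114, 18), (115, -18), (128, -9), (144, -9),
  (160, 9), (264, -9), (265, 9), (266, -9), (276, 27), (279, -18), (292, -9), (293, -9), (295,
  -9), (308, -18), (309, -18), (310, 9), (311, 18), (321, -18), (322, -9), (337, -18), (338, -9),
  (339, 27), (353, -9), (369, 9), (370, -9), (371, -18), (384, 9), (400, 9), (416, 9), (520, -9),
  (521, -9), (522, 9), (532, 18), (534, 9), (535, -9), (549, 27), (550, -18), (564, 9), (566, -9),
  (577, -27), (578, 18), (579, 9), (593, -27), (609, -18), (610, 18), (611, -9), (626, 9), (640,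
  -9), (656, 9), (672, -9), (776, -1), (777, 1), (778, 1), (788, 3), (790, 1), (805, 3), (806,
  -1), (807, -1), (820, -3), (821, -3), (823, 1), (833, -3), (834, 3), (849, -3), (851, 3), (866,
  1), (867, -1), (881, 1), (883, -1), (896, -1), (912, 1), (928, 1), (1033, 2), (1034, -2), (1044,
  4), (1045, 2), (1060, 2), (1063, 2), (1076, 2), (1077, 2), (1078, -2), (1089, -4), (1090, -2),
  (1091, -2), (1105, -2), (1107, -2), (1123, 2), (1138, -2), (1152, -2), (1184, -2), (1288, -2),
  (1290, -2), (1300, 2), (1301, 2), (1302, 2), (1303, 2), (1317, 2), (1319, 2), (1332, 2), (1333,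
  4), (1345, -2), (1347, -2), (1361, -2), (1362, -2), (1363, -4), (1377, -2), (1393, -2), (1394,
  -2), (1408, -2), (1424, -2)], [(8, -9), (9, -9), (10, 9), (21, -9), (22, -9), (23, -9), (37,
  -18), (38, 27), (52, 9), (53, 18), (54, -18), (55, -18), (66, -9), (81, -9), (82, 9), (83, -18),
  (97, -9), (98, -18), (113, -9), (114, -18), (115, 27), (128, 9), (144, 9), (160, 9), (264, 9),
  (265, 9), (266, 9), (276, -18), (277, -9), (279, 18), (292, 9), (293, 9), (295, 9), (308, 18),
  (309, 18), (310, -27), (311, -27), (321, 18), (322, 9), (323, -9), (337, 18), (338, 9), (339,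
  -18), (353, 27), (370, 9), (371, 18), (384, -9), (400, 9), (416, -9), (520, -9), (521, 9), (522,
  -9), (532, -18), (535, 27), (548, 9), (549, -9), (550, 18), (564, -9), (566, 9), (577, 18),
  (578, -18), (579, -9), (593, 9), (609, 18), (610, -27), (611, 9), (626, -27), (640, -9), (656,
  -9), (672, 9), (776, -1), (777, 1), (778, 1), (788, -1), (789, -1), (791, 3), (804, 1), (806,
  3), (821, 1), (822, -3), (823, -3), (833, 1), (835, -1), (850, 1), (851, -1), (865, 3), (866,
  -3), (882, -3), (883, 3), (896, -1), (912, 1), (928, 1), (1032, -2), (1034, -2), (1046, -2),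
  (1047, 2), (1060, 2), (1061, 2), (1062, -2), (1076, 2), (1079, 2), (1090, -2), (1091, -2),
  (1106, -2), (1121, 2), (1122, 2), (1137, -2), (1139, -2), (1168, 2), (1184, -2), (1288, -2),
  (1289, -2), (1301, 2), (1303, 2), (1316, 2), (1317, 2), (1318, 2), (1319, 2), (1334, 2), (1335,
  4), (1346, -2), (1361, -2), (1362, -2), (1378, -2), (1379, -2), (1393, -2), (1394, -2), (1395,
  -4), (1408, -2), (1440, -2)]]

/-- The connecting map from the Koszul complex to its shift in odd degrees at least three. -/
def fOdd : List (List (ℕ × ℤ)) :=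
  [[(10, 18), (36, -9), (37, -9), (54, 9), (67, -9), (114, -9), (160, -18)], [(265, 18), (278,
  -9), (279, -9), (308, 9), (337, -9), (355, -9), (400, -18)], [(520, -18), (533, 9), (551, 9),
  (578, 9), (594, 9), (609, 9), (625, 9), (640, 18)], [(776, 2), (777, -2), (778, -2), (788, 1),
  (791, 1), (805, 1), (806, 1), (820, -1), (821, -1), (822, -1), (823, -1), (833, 1), (834, -1),
  (849, 1), (851, -1), (865, -1), (866, 1), (882, 1), (883, -1), (896, -2), (912, 2), (928, 2)],
  [(1033, -2), (1034, 2), (1045, 2), (1063, -2), (1076, -2), (1078, 2), (1090, -2), (1091, -2),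
  (1106, -2), (1121, 2), (1123, 2), (1137, 2), (1168, 2), (1184, -2), (1289, -2), (1290, 2),
  (1301, 2), (1319, -2), (1332, -2), (1334, 2), (1346, -2), (1347, -2), (1362, -2), (1377, 2),
  (1379, 2), (1393, 2), (1424, 2), (1440, -2)], [(1032, 2), (1033, 2), (1045, -2), (1046, -2),
  (1047, -2), (1060, -2), (1061, -2), (1078, -2), (1091, 2), (1105, -2), (1121, -2), (1137, -2),
  (1138, -2), (1152, -2), (1168, -2), (1288, 2), (1289, 2), (1301, -2), (1302, -2), (1303, -2),
  (1316, -2), (1317, -2), (1334, -2), (1347, 2), (1361, -2), (1377, -2), (1393, -2), (1394, -2),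
  (1408, -2), (1424, -2)]]

/-- The connecting map from the Koszul complex to its shift in even degrees at least three. -/
def fEven : List (List (ℕ × ℤ)) :=
  [[(10, -18), (39, 9), (52, 9), (66, -9), (82, -9), (99, 9), (160, -18)], [(265, -18), (277, 9),
  (310, 9), (323, 9), (353, -9), (369, -9), (400, -18)], [(520, 18), (534, -9), (535, -9), (548,
  -9), (549, -9), (593, 9), (626, 9), (640, 18)], [(776, -2), (777, 2), (778, 2), (788, -1), (789,
  -1), (790, 1), (804, 1), (806, -1), (807, -1), (821, 1), (823, 1), (833, 1), (835, -1), (850,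
  1), (851, -1), (866, 1), (867, -1), (881, 1), (883, -1), (896, -2), (912, 2), (928, 2)], [(1032,
  -2), (1033, 2), (1034, -4), (1045, 2), (1046, -2), (1047, -2), (1060, 4), (1061, 4), (1063, 2),
  (1076, 2), (1078, -4), (1090, -2), (1091, -4), (1105, 2), (1106, -2), (1121, -2), (1123, 2),
  (1137, -2), (1138, -4), (1152, -2), (1168, 2), (1184, -4), (1288, -4), (1289, -2), (1290, -2),
  (1301, 4), (1302, 2), (1303, 2), (1316, 2), (1317, 2), (1319, 4), (1332, -2), (1334, -2), (1346,
  -4), (1347, -2), (1361, -2), (1362, -4), (1377, -4), (1379, -2), (1393, -4), (1394, -2), (1408,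
  -4), (1424, -2), (1440, -2)], [(1032, -2), (1033, 2), (1034, -4), (1045, 2), (1046, -2), (1047,
  -2), (1060, 4), (1061, 4), (1063, 2), (1076, 2), (1078, -4), (1090, -2), (1091, -4), (1105, 2),
  (1106, -2), (1121, -2), (1123, 2), (1137, -2), (1138, -4), (1152, -2), (1168, 2), (1184, -4),
  (1288, -4), (1289, -2), (1290, -2), (1301, 4), (1302, 2), (1303, 2), (1316, 2), (1317, 2),
  (1319, 4), (1332, -2), (1334, -2), (1346, -4), (1347, -2), (1361, -2), (1362, -4), (1377, -4),
  (1379, -2), (1393, -4), (1394, -2), (1408, -4), (1424, -2), (1440, -2)]]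

/-- Eighteen times a contracting homotopy of the Koszul complex in degree 0. -/
def s₀ : List (List (List (ℕ × ℤ))) :=
  [[[], [(0, 18)], [(256, 18)], [(512, 18)], [(2, 18), (272, 18)], [(259, 18), (544, 18)], [(32,
  18), (257, 18)], [(3, 18), (528, 18)], [(34, 18), (260, 18), (352, 18)], [(5, 18), (275, 18),
  (576, 18)], [(35, 18), (263, 18), (608, 18)], [(10, 18), (114, 18), (400, -18), (532, 18)]]]

/-- Eighteen times a contracting homotopy of the Koszul complex in degree 1. -/
def s₁ : List (List (List (ℕ × ℤ))) :=
  [[[], [(0, 18)], [], [(768, 18)], [(3, -18), (304, 18), (1026, -18), (1040, 18)], [(259, -18),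
  (800, 18)], [(32, 18)], [(2, -18), (784, 18)], [(80, -18), (260, 18), (291, 18), (801, 18)],
  [(6, -18), (112, -18), (785, 18)], [(34, -18), (307, 18), (529, -18), (864, 18), (880, 18),
  (1029, -18)], [(10, -18), (115, -18), (578, 18), (790, 18), (791, 18), (1168, -18)]], [[], [],
  [(256, 18)], [(1024, 18)], [(272, 18)], [(257, -18), (1056, 18)], [], [(304, -18), (1026, 18)],
  [(352, 18)], [(786, 18)], [(260, -18), (336, -18), (1058, 18)], [(400, -18)]], [[], [], [],
  [(512, 18)], [], [(544, 18)], [], [(528, 18)], [(307, -18), (529, 18), (880, -18), (1029, 18)],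
  [(576, 18)], [(608, 18)], [(535, -18), (640, 18), (883, 18)]]]

/-- Eighteen times a contracting homotopy of the Koszul complex in degree 2. -/
def s₂ : List (List (List (ℕ × ℤ))) :=
  [[[], [(0, 18)], [], [(512, -18), (768, 6), (1024, -6), (1280, -12)], [(48, -18), (259, -18),
  (513, 18), (769, -6), (1025, 6), (1281, 12)], [(259, 18)], [(32, 18)], [], [(80, -18), (260,
  18), (261, 18)], [(112, -18)], [(35, 18), (50, 18), (263, -18), (274, -18), (289, 18), (307,
  -18), (336, 18), (516, -18), (531, 18), (546, -18), (608, -18), (772, 6), (785, -6), (787, -6),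
  (802, 6), (832, -6), (864, 6), (1030, -6), (1031, -6), (1074, -12), (1120, -6), (1136, -6),
  (1286, 6), (1287, 6), (1330, -6), (1376, -12), (1392, -12)], [(10, 18), (67, 18), (114, 18),
  (279, -18), (371, -18), (400, 18), (533, 18), (578, -18), (640, -18), (791, 6), (881, -6), (882,
  -6), (896, 6), (1045, 6), (1091, -12), (1168, 6), (1301, 12), (1347, -6), (1424, -6)]], [[], [],
  [(256, 18)], [], [(272, 18)], [], [], [(304, -18)], [(352, 18)], [], [(336, -18)], [(400,
  -18)]], [[], [], [], [(512, 18)], [], [(544, 18)], [], [(528, 18)], [], [(576, 18)], [(608,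
  18)], [(640, 18)]], [[], [], [], [(0, -18), (768, 6), (1024, 12), (1280, 6)], [(3, 18), (304,
  18), (528, -18), (784, 6), (1040, -6), (1296, -12)], [(32, -18), (257, 18), (800, 6), (1056,
  12), (1312, 6)], [], [], [(50, -18), (263, 18), (274, 18), (289, -18), (307, 18), (516, 18),
  (531, -18), (772, -6), (786, -6), (880, -6), (1028, 6), (1042, 6), (1136, 6), (1284, 12), (1298,
  -6), (1392, 12)], [(6, -18), (64, -18), (273, 18), (368, 18), (530, -18), (785, -6), (880, -6),
  (1041, 6), (1136, 6), (1297, -6), (1392, -6)], [(5, 18), (51, 18), (96, -18), (112, -18), (275,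
  -18), (305, -18), (519, -18), (529, 18), (547, -18), (576, 18), (775, 6), (787, 6), (803, 6),
  (864, 6), (880, 6), (1031, -6), (1041, 6), (1043, -12), (1059, -6), (1088, -6), (1120, 12),
  (1136, 12), (1287, -12), (1298, 6), (1315, -12), (1376, 6)], [(115, 18), (128, -18), (369, -18),
  (534, 18), (656, 18), (881, 6), (912, -6), (1137, -6), (1168, 6), (1393, 6), (1424, 12)]], [[],
  [], [], [(256, -18), (768, 6), (1024, -6), (1280, 6)], [(1, 18), (784, 6), (1040, 12), (1296,
  6)], [(258, 18), (800, 6), (1056, -6), (1312, 6)], [(544, -18), (800, 6), (1056, -6), (1312,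
  -12)], [(2, 18), (48, 18), (259, 18), (272, -18), (513, -18), (769, 6), (784, 6), (1025, -6),
  (1040, -6), (1281, -12), (1296, 6)], [(5, -18), (51, -18), (112, 18), (275, 18), (305, 18),
  (519, 18), (529, -18), (576, -18), (775, -6), (787, -6), (880, -6), (1031, 6), (1043, 6), (1136,
  -12), (1287, 12), (1299, -6), (1392, -6)], [], [(34, 18), (80, 18), (260, -18), (261, -18),
  (352, -18), (545, -18), (801, 6), (864, 6), (1057, -6), (1120, -6), (1313, -12), (1376, 6)],
  [(8, 18), (66, 18), (144, 18), (276, -18), (384, -18), (577, -18), (788, 6), (881, -6), (883,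
  -6), (896, 6), (1044, -6), (1138, -12), (1139, 6), (1152, -6), (1168, -12), (1300, 6), (1393,
  6), (1408, -6)]]]

/-- Eighteen times a contracting homotopy of the Koszul complex in degree 3. -/
def s₃ : List (List (List (ℕ × ℤ))) :=
  [[[], [(0, 18)], [], [], [(48, -18)], [], [(32, 18)], [], [(80, -18)], [(112, -18)], [(5, 9),
  (6, -9), (7, -9), (33, -9), (35, 9), (50, 9), (80, 9), (112, -9), (260, -9), (263, 9), (274,
  -9), (275, 9), (291, -9), (305, 9), (306, -9), (307, 18), (336, -9), (352, -9), (516, 9), (519,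
  -9), (529, 18), (530, 9), (545, 9), (546, 18), (562, -9), (576, 9), (608, 9), (772, 3), (773,
  1), (774, 1), (787, 4), (801, 2), (803, -1), (818, -1), (819, 2), (832, -3), (864, 2), (880,
  -5), (1028, -2), (1030, -4), (1057, 4), (1073, -8), (1074, 4), (1104, 2), (1285, -4), (1297,
  -4), (1298, 6), (1299, -4), (1315, 2), (1329, 4), (1330, -4), (1344, -8), (1360, -4), (1392,
  4)], [(9, 9), (10, -18), (22, -9), (65, -9), (67, 9), (114, 9), (144, 9), (276, -9), (279, 9),
  (323, -9), (369, 9), (371, 18), (400, -9), (533, -9), (534, 9), (577, 9), (578, 18), (625, -9),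
  (640, 9), (789, -2), (790, -2), (834, 1), (882, 2), (883, 5), (896, 4), (912, 2), (1044, -4),
  (1047, -4), (1091, 8), (1138, 2), (1152, -4), (1168, 4), (1300, 8), (1303, 2), (1346, -4),
  (1393, 4), (1394, -4), (1395, -4), (1408, 2), (1424, -8)]], [[], [], [(256, 18)], [], [(272,
  18)], [], [], [(304, -18)], [(352, 18)], [], [(336, -18)], [(400, -18)]], [[], [], [], [(512,
  18)], [], [(544, 18)], [], [(528, 18)], [], [(576, 18)], [(608, 18)], [(640, 18)]], [[], [], [],
  [(768, 18)], [(48, -18), (257, 18), (304, 18), (784, 18)], [(32, -18), (784, -6), (800, 18),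
  (1026, -12), (1282, 6), (1296, -6)], [(32, 18), (784, 6), (1026, 12), (1282, -6), (1296, 6)],
  [(48, 18), (257, -18), (304, -18)], [(50, 18), (51, 18), (80, -18), (112, 18), (260, -18), (263,
  -18), (305, -18), (307, -18), (352, 18), (576, -18), (880, -6), (1043, -6), (1136, 6), (1299,
  12), (1392, -6)], [(64, -18), (112, -18), (368, 18), (576, 18), (880, -12), (1043, 6), (1136,
  -6), (1299, -12), (1392, 6)], [(34, -18), (35, -18), (50, -18), (51, -18), (80, 18), (96, -18),
  (112, -18), (260, 18), (263, 18), (305, 18), (307, 18), (352, -18), (576, 18), (832, -6), (864,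
  18), (1029, -12), (1030, -12), (1042, -6), (1043, 12), (1285, 6), (1286, 6), (1298, -6), (1299,
  -24), (1344, 6)], [(66, -18), (67, -18), (81, 18), (113, -18), (114, -18), (115, -18), (309,
  -18), (354, -18), (355, -18), (369, 18), (577, 18), (578, 18), (579, 18), (896, 12), (912, -6),
  (1044, -6), (1045, -18), (1089, 6), (1090, -6), (1137, -6), (1138, -6), (1300, 6), (1301, 12),
  (1302, 6), (1303, 18), (1347, 6), (1394, 12)]], [[], [], [], [(1024, 18), (1280, -18)], [(48,
  -18), (257, -18), (304, 18), (1296, 18)], [(784, 6), (1026, 12), (1056, 18), (1282, -6), (1312,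
  -18)], [(32, 18), (1296, 6)], [(48, -18), (304, 18)], [(50, -18), (80, -18), (112, -18), (260,
  -18), (263, 18), (305, -18), (352, -18), (576, -18), (880, -6), (1136, -6), (1392, -12)], [(112,
  -18), (368, 18), (1043, -6), (1136, -6), (1299, 12), (1392, 6)], [(34, -18), (35, 18), (51,
  -18), (80, -18), (260, -18), (305, -18), (307, 18), (576, -18), (785, -6), (786, 6), (880, -6),
  (1030, -12), (1043, 6), (1120, 18), (1136, 18), (1286, 6), (1298, -6), (1299, -6), (1376, -18),
  (1392, -18)], [(66, -18), (67, 18), (115, -18), (144, -18), (369, -18), (371, 18), (578, 18),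
  (656, -18), (881, -6), (883, -12), (896, -6), (912, -6), (1044, 6), (1046, 18), (1047, 6),
  (1137, -6), (1302, -12), (1303, -6), (1345, -12), (1347, 6), (1393, 6), (1424, -18)]], [[], [],
  [], [(1280, 18)], [(257, 18), (1040, -18)], [(32, 18), (784, -6), (1026, -12), (1282, 6), (1296,
  6), (1312, 18)], [(784, -6), (1026, -12), (1282, 6)], [(48, 18), (257, 18), (304, -18)], [(50,
  18), (51, -18), (112, 18), (263, -18), (307, 18), (352, 18), (1043, 6), (1136, 24), (1299, -12),
  (1392, -6)], [(64, 18), (576, -18), (880, -6), (1043, 6), (1299, -12)], [(35, -18), (50, 18),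
  (80, 18), (96, 18), (112, 18), (260, 18), (263, -18), (305, 18), (352, 18), (576, 18), (785, 6),
  (787, 12), (832, -6), (1029, 12), (1042, 6), (1043, -6), (1285, -6), (1344, -6), (1376, 18),
  (1392, 18)], [(67, -18), (81, -18), (113, -18), (114, 18), (369, 18), (384, 18), (577, -18),
  (656, 18), (881, -6), (883, 6), (1045, -6), (1046, 6), (1047, 6), (1137, -6), (1168, 12), (1300,
  -12), (1303, 6), (1346, -12), (1347, 6), (1394, 6), (1408, 6)]]]

/-- Eighteen times the component through `f₀` of the contracting homotopy in degree 3. -/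
def t₃ : List (List (List (ℕ × ℤ))) :=
  [[[], [], [], [], [], [], [], [], [], [], [(0, -1)], [(16, -1)]]]

/-- A contracting homotopy of the Koszul complex in even degrees at least four. -/
def sEven : List (List (List (ℕ × ℤ))) :=
  [[[], [(0, 1)], [], [], [], [(48, -1)], [(32, 1)], [], [(64, 1)], [(112, -1)], [], [(160, -1)]],
  [[], [], [(256, 1)], [], [(272, 1)], [], [(304, -1)], [], [(368, -1)], [], [(336, -1)], [(400,
  -1)]], [[], [], [], [(512, 1)], [], [(544, 1)], [], [(528, 1)], [], [(576, 1)], [(608, 1)],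
  [(640, 1)]], [[], [], [], [(768, 1)], [], [], [(800, 1)], [(784, 1)], [], [(832, 1)], [(848,
  -1)], [(896, 1)]], [[], [], [], [(1024, 1), (1280, 1)], [(1296, -1)], [], [(1056, -1)], [], [],
  [(1136, 1)], [(1360, 1)], [(1152, 1), (1408, 1)]], [[], [], [], [(1280, 1)], [(1040, 1)], [],
  [(1056, -1), (1312, -1)], [], [], [(1136, 1), (1392, 1)], [(1104, -1)], [(1408, 1)]]]

/-- A contracting homotopy of the Koszul complex in odd degrees at least four. -/
def sOdd : List (List (List (ℕ × ℤ))) :=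
  [[[], [(0, 1)], [], [], [], [(48, -1)], [(32, 1)], [], [(64, 1)], [(112, -1)], [], [(160, -1)]],
  [[], [], [(256, 1)], [], [(272, 1)], [], [(304, -1)], [], [(368, -1)], [], [(336, -1)], [(400,
  -1)]], [[], [], [], [(512, 1)], [], [(544, 1)], [], [(528, 1)], [], [(576, 1)], [(608, 1)],
  [(640, 1)]], [[], [], [], [(768, 1)], [], [], [(800, 1)], [(784, 1)], [], [(832, 1)], [(848,
  -1)], [(896, 1)]], [[], [], [], [(1024, 1), (1280, -1)], [(1296, 1)], [], [(1056, -1)], [], [],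
  [(1136, 1)], [(1360, -1)], [(1152, 1), (1408, -1)]], [[], [], [], [(1280, 1)], [(1040, -1)], [],
  [(1056, 1), (1312, -1)], [], [], [(1136, -1), (1392, 1)], [(1104, 1)], [(1408, 1)]]]

/-- The cocycles of the Koszul complex in degree 0. -/
def cocycles₀ : KernelData where
  scalar := 2
  free :=
    [0, 6, 7, 11]
  ker :=
    [[(0, 2)], [(4, 2), (6, 2)], [(4, -2), (5, -2), (7, 2)], [(11, 2)]]
  inv :=
    [[[], [], [], [], [], [], [(2, -2)], [(3, 2)], [], [(5, 2)], [], [(10, 1)]], [[], [], [], [],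
    [(1, -2)], [], [], [], [(4, 2)], [], [], [(9, 1)]], [[], [], [], [], [], [], [], [], [], [],
    [], [(8, -1)]]]

/-- The cocycles of the Koszul complex in degree 1. -/
def cocycles₁ : KernelData where
  scalar := 2
  free :=
    [9, 10, 11, 18, 22, 24, 25, 26, 27, 37, 38, 40, 41, 42, 43]
  ker :=
    [[(8, -2), (9, 2)], [(10, 2)], [(11, 2)], [(1, 2), (18, 2), (35, 2)], [(4, 2), (5, 2), (7, 2),
    (21, 2), (22, 2), (23, 2)], [(8, 2), (24, 2)], [(25, 2)], [(8, 2), (26, 2)], [(27, 2)], [(4,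
    2), (5, 2), (7, 2), (20, 2), (21, 2), (23, 2), (36, 2), (37, 2), (39, 2)], [(4, -4), (5, -2),
    (6, 2), (7, -2), (20, -2), (21, -2), (23, -2), (36, -2), (38, 2)], [(40, 2)], [(8, 2), (41,
    2)], [(8, -2), (42, 2)], [(43, 2)]]
  inv :=
    [[[], [], [], [], [], [], [(2, 2)], [(3, 2)], [(4, 2)], [(4, 2), (5, 2)], [], []], [[], [],
    [], [], [(17, 2)], [(19, 2)], [], [], [(5, -1), (6, -1), (7, -1), (20, 1), (21, -1), (23,
    -1)], [], [(5, -1), (6, -1), (7, -1), (20, 1), (21, -1), (23, 1)], []], [[], [], [], [(0, -1),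
    (16, -1), (32, 1)], [(33, -2)], [], [(34, -2)], [], [], [(20, -1), (21, -1), (23, -1), (39,
    -2)], [(4, 4), (5, 2), (6, -2), (7, 2), (20, 3), (21, 3), (23, 3), (36, 2), (39, 2)], []],
    [[], [(16, 2)], [(0, 2)], [], [], [(1, -2), (35, -2)], [], [], [(4, -2), (5, -1), (6, 1), (7,
    -1), (20, -1), (21, -1), (23, -1)], [(20, 1), (21, 1), (23, 1)], [], [(8, -2)]], [[], [], [],
    [], [], [], [(35, -2)], [], [], [], [(5, 1), (6, 1), (7, 1)], []]]

/-- The cocycles of the Koszul complex in degree 2. -/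
def cocycles₂ : KernelData where
  scalar := 6
  free :=
    [0, 6, 7, 9, 11, 16, 22, 23, 24, 26, 27, 32, 38, 39, 41, 42, 43, 53, 58, 59, 64, 65, 66, 67,
    68, 69, 70, 72, 73, 74, 75]
  ker :=
    [[(0, 6)], [(4, 6), (6, 6)], [(4, -6), (5, -6), (7, 6)], [(8, 6), (9, 6), (56, 12), (57, 12)],
    [(11, 6)], [(16, 6)], [(20, 6), (22, 6)], [(20, -6), (21, -6), (23, 6)], [(8, -6), (24, 6)],
    [(8, -6), (26, 6), (57, -12)], [(27, 6)], [(32, 6)], [(36, 6), (38, 6)], [(36, -6), (37, -6),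
    (39, 6)], [(8, 6), (41, 6), (56, 12), (57, 12)], [(8, -6), (42, 6), (57, -12)], [(43, 6)],
    [(52, 6), (53, 6), (71, -6)], [(8, 6), (56, 6), (57, 6), (58, 6)], [(59, 6)], [(48, 6), (64,
    6)], [(1, -6), (18, 6), (35, 6), (49, 6), (65, 6)], [(1, 6), (18, -6), (35, 6), (50, 6), (66,
    6)], [(1, 6), (18, 6), (35, -6), (51, 6), (67, 6)], [(54, 6), (68, 6)], [(54, -6), (55, -6),
    (69, 6)], [(52, 6), (70, 6)], [(56, -6), (72, 6)], [(57, -6), (73, 6)], [(8, 6), (56, 6), (57,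
    6), (74, 6)], [(75, 6)]]
  inv :=
    [[[], [], [], [], [], [], [(2, -6), (18, 6)], [(3, 6), (35, -6)], [(4, -6), (52, 6), (55,
    -12), (71, 12)], [(4, 6), (5, 6), (55, 6), (71, -12)], [], [(8, -3), (10, 3), (57, -6)]], [[],
    [], [], [], [(1, 6), (17, -6)], [(19, 6), (35, -6)], [], [], [(20, 6), (52, -6), (55, 12),
    (71, -12)], [], [(21, 6), (52, 6), (55, -6)], [(8, 3), (25, 3), (56, 6), (57, 6)]], [[], [],
    [], [], [(1, 6), (33, -6)], [], [(18, 6), (34, -6)], [], [], [(36, -6), (37, -6), (55, -6),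
    (71, 12)], [(37, -6), (52, -6), (55, 6)], [(8, 3), (40, -3)]], [[], [], [], [], [], [(1, -2),
    (35, 2)], [(1, 2), (18, -2)], [], [(71, 6)], [(52, -4), (54, 2), (55, 4), (71, -4)], [], [(8,
    -1), (56, -2)]], [[], [(48, -6)], [], [], [], [(1, 4), (18, -2), (35, -2), (49, -6)], [(1,
    -2), (18, -2), (35, -2), (49, -2), (50, -2), (51, -2)], [], [(52, -2), (54, -2), (55, 2), (71,
    -2)], [], [], [(8, 4), (56, 2), (57, 6)]], [[], [], [], [], [(1, -4), (18, -4), (35, 2), (49,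
    2), (50, 2), (51, -4)], [(49, -2), (50, -2), (51, -2)], [], [], [], [(52, -2), (54, -2), (55,
    -4), (71, 4)], [], [(8, 2), (56, -2)]]]

/-- The cocycles of the Koszul complex in odd degrees at least three. -/
def cocyclesOdd : KernelData where
  scalar := 6
  free :=
    [1, 6, 7, 8, 9, 10, 11, 18, 22, 23, 24, 25, 26, 27, 35, 38, 39, 40, 41, 42, 43, 50, 54, 55,
    56, 57, 58, 59, 69, 73, 74, 75, 81, 82, 84, 85, 87, 88, 89, 90, 91]
  ker :=
    [[(1, 6)], [(4, -6), (6, 6)], [(4, 6), (5, 6), (7, 6)], [(8, 6)], [(9, 6)], [(10, 6)], [(11,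
    6)], [(18, 6)], [(20, -6), (22, 6)], [(20, 6), (21, 6), (23, 6)], [(24, 6)], [(25, 6)], [(26,
    6)], [(27, 6)], [(35, 6)], [(36, -6), (38, 6)], [(36, 6), (37, 6), (39, 6)], [(40, 6)], [(41,
    6)], [(42, 6)], [(43, 6)], [(49, 6), (50, 6), (51, 6)], [(52, -6), (54, 6)], [(52, 6), (53,
    6), (55, 6)], [(56, 6)], [(57, 6)], [(58, 6)], [(59, 6)], [(68, 12), (69, 6), (70, 6), (71,
    -6)], [(72, -6), (73, 6)], [(74, 6)], [(75, 6)], [(66, -6), (67, 6), (81, 6), (83, -6)], [(65,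
    6), (66, -6), (82, 6), (83, -6)], [(68, -12), (70, -12), (84, 6), (86, 6)], [(68, 6), (85,
    6)], [(70, -6), (86, 6), (87, 6)], [(88, 6)], [(72, -6), (89, 6)], [(72, 6), (90, 6)], [(91,
    6)]]
  inv :=
    [[[], [(0, 3)], [], [], [], [], [(2, 6)], [(3, 6)], [(4, 6)], [(4, 6), (5, 6)], [], []], [[],
    [], [(16, 3)], [], [(17, 6)], [(19, 6)], [], [], [(20, 6)], [], [(21, -6)], []], [[], [], [],
    [(32, 3)], [(33, -6)], [], [(34, -6)], [], [], [(36, 6), (37, 6)], [(37, -6)], []], [[], [(48,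
    3)], [], [], [], [(49, -6), (51, -6)], [(51, -6)], [], [(52, 4), (53, 2)], [], [(52, -2), (53,
    -4)], []], [[], [(64, -2), (80, -2)], [(64, 2), (80, -4)], [], [], [(65, -6), (83, 6)], [(65,
    2), (66, -4), (67, 2), (83, -6)], [(65, -4), (66, 2), (67, -4), (83, 6)], [(68, -6)], [(68,
    6), (70, 12), (71, -6), (86, -6)], [], [(72, -6)]], [[], [], [], [], [], [], [(83, 6)], [],
    [(70, 6), (86, -6)], [], [(68, -6), (71, 6)], []]]

/-- The cocycles of the Koszul complex in even degrees at least three. -/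
def cocyclesEven : KernelData where
  scalar := 6
  free :=
    [0, 1, 6, 7, 8, 9, 11, 16, 18, 22, 23, 24, 26, 27, 32, 35, 38, 39, 41, 42, 43, 48, 51, 54, 55,
    57, 58, 59, 69, 74, 75, 80, 82, 83, 84, 85, 86, 88, 89, 90, 91]
  ker :=
    [[(0, 6)], [(1, 6)], [(4, 6), (6, 6)], [(4, -6), (5, -6), (7, 6)], [(8, 6)], [(9, 6)], [(11,
    6)], [(16, 6)], [(18, 6)], [(20, 6), (22, 6)], [(20, -6), (21, -6), (23, 6)], [(24, 6)], [(26,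
    6)], [(27, 6)], [(32, 6)], [(35, 6)], [(36, 6), (38, 6)], [(36, -6), (37, -6), (39, 6)], [(41,
    6)], [(42, 6)], [(43, 6)], [(48, 6)], [(49, 6), (50, 6), (51, 6)], [(52, 6), (54, 6)], [(52,
    -6), (53, -6), (55, 6)], [(56, 6), (57, 6)], [(56, 6), (58, 6)], [(59, 6)], [(68, 6), (69, 6),
    (87, -6)], [(72, -6), (73, 6), (74, 6)], [(75, 6)], [(64, 6), (80, 6)], [(65, -6), (66, 6),
    (81, -6), (82, 6)], [(65, -6), (67, 6), (81, -6), (83, 6)], [(70, 6), (84, 6)], [(70, -6),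
    (71, -6), (85, 6)], [(68, 6), (86, 6)], [(72, -6), (88, 6)], [(73, -6), (89, 6)], [(72, -6),
    (73, 6), (90, 6)], [(91, 6)]]
  inv :=
    [[[], [], [], [], [], [], [(2, -6)], [(3, 6)], [(4, -6)], [(4, 6), (5, 6)], [], [(10, 3)]],
    [[], [], [], [], [(17, -6)], [(19, 6)], [], [], [(20, 6)], [], [(21, 6)], [(25, 3)]], [[], [],
    [], [], [(33, -6)], [], [(34, -6)], [], [], [(36, -6), (37, -6)], [(37, -6)], [(40, -3)]],
    [[], [], [], [], [(49, -4), (50, -2)], [], [(49, -2), (50, -4)], [], [(53, 6)], [], [(52, 6)],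
    [(56, -3)]], [[], [(64, -6)], [], [], [(65, -2), (66, -2), (67, -2)], [(65, 2), (66, 2), (67,
    2), (81, 6)], [], [], [(68, -2), (70, -2), (71, 2), (87, -2)], [], [], [(72, -6), (73, 6)]],
    [[], [], [], [], [], [], [(65, -4), (66, 2), (67, -4), (81, -6)], [(67, 6)], [(87, -6)], [(68,
    -6)], [(68, 4), (70, -2), (71, -4), (87, -2)], [(72, -6)]]]

end Tables

section Checks

/-- The action on standard vectors of the right linear map given by a table of its values on left
multiples of generators. -/
def homT (S : ℕ → ℕ → List (ℕ × ℤ)) (n : ℕ) : List (ℕ × ℤ) :=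
  lin (act 0 (n % 16)) (S (n / 256) (n / 16 % 16))

/-- The entry of a table. -/
def entry (S : List (List (List (ℕ × ℤ)))) (g u : ℕ) : List (ℕ × ℤ) := (S.getD g []).getD u []

/-- The augmentation on standard vectors. -/
def augT (n : ℕ) : List (ℕ × ℤ) := lin (fun t => tmul t (n % 16)) (tmul (n / 16 % 16) 0)

/-- The valid indices for `Model.kap` without right factor. -/
def validL (r n : ℕ) : Bool := validK r n && Nat.beq (n % 16) 0

/-- Whether `d s + f t + s' d'` is multiplication by `N` on left multiples of generators. -/
def homotopyCheck (r r' : ℕ) (N : ℤ) (d : List (List (ℕ × ℤ))) (s : ℕ → ℕ → List (ℕ × ℤ))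
    (f : List (List (ℕ × ℤ))) (t : ℕ → ℕ → List (ℕ × ℤ)) (d' : List (List (ℕ × ℤ)))
    (s' : ℕ → ℕ → List (ℕ × ℤ)) : Bool :=
  checkZero (validL r) (256 * r) 11 fun n =>
    (n, -N) :: (lin (mapT d) (guard (validK r) (homT s) n) ++
      (lin (mapT f) (guard (validK r) (homT t) n) ++ lin (guard (validK r') (homT s')) (mapT d' n)))

/-- Whether `d₁ s₀ + j ε` is multiplication by eighteen, for the section `j` of the augmentation
`ε` with values in the right multiples of the generator. -/
def augCheck : Bool :=
  checkZero (validK 1) 256 11 fun n =>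
    (n, -18) :: (lin (mapT d₁) (guard (validK 1) (homT (entry s₀)) n) ++ scale 18 (augT n))

/-- A map from degree three to degree zero splitting `f₀` modulo boundaries. -/
def tau (g u : ℕ) : List (ℕ × ℤ) :=
  bif Nat.beq g 0 then
    (bif Nat.beq u 11 then [(1, -1)] else []) ++
      lin (fun w => bif Nat.beq w 11 then [(0, 1)] else []) (tmul u 1)
  else []

/-- Whether `tau` vanishes on boundaries. -/
def tauCheck : Bool :=
  checkZero (validL 6) (256 * 6) 11 fun n => lin (guard (validK 6) (homT tau)) (mapT dEven n)

lemma augCheck_eq : augCheck = true := by decide +kernel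
lemma homotopyCheck_tau : homotopyCheck 1 6 18 d₁ (entry s₀) [] (fun _ _ => []) f₀ tau = true := by
  decide +kernel
lemma tauCheck_eq : tauCheck = true := by decide +kernel
lemma homotopyCheck_one :
    homotopyCheck 3 1 18 d₂ (entry s₁) [] (fun _ _ => []) d₁ (entry s₀) = true := by decide +kernel
lemma homotopyCheck_two :
    homotopyCheck 5 3 18 d₃ (entry s₂) [] (fun _ _ => []) d₂ (entry s₁) = true := by decide +kernel
lemma homotopyCheck_three :
    homotopyCheck 6 5 18 dEven (entry s₃) f₀ (entry t₃) d₃ (entry s₂) = true := by decide +kernel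
lemma homotopyCheck_even :
    homotopyCheck 6 6 1 dOdd (entry sEven) [] (fun _ _ => []) dEven (entry sOdd) = true := by
  decide +kernel
lemma homotopyCheck_odd :
    homotopyCheck 6 6 1 dEven (entry sOdd) [] (fun _ _ => []) dOdd (entry sEven) = true := by
  decide +kernel

/-- The coordinate of a standard vector among the free ones. -/
def position (n : ℕ) : List ℕ → ℕ → List (ℕ × ℤ)
  | [], _ => []
  | a :: L, i => bif Nat.beq a n then [(i, 1)] else position n L (i + 1)

namespace KernelData

/-- The map to the kernel. -/
def kerT (D : KernelData) (n : ℕ) : List (ℕ × ℤ) := D.ker.getD n []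

/-- The projection to the free coordinates. -/
def freeT (D : KernelData) (n : ℕ) : List (ℕ × ℤ) := position n D.free 0

/-- The partial inverse. -/
def invT (D : KernelData) (n : ℕ) : List (ℕ × ℤ) := (D.inv.getD (n / 16) []).getD (n % 16) []

/-- Whether `D` describes the kernel, of dimension `z`, of the map `Aʳ' → Aʳ` induced by `rows`. -/
def check (D : KernelData) (r r' z : ℕ) (rows : List (List (ℕ × ℤ))) : Bool :=
  allBelow (fun n => isZero 11 (lin (guard (validV r') (dualT r rows)) (D.kerT n))) z &&
  (allBelow (fun n => isZero 11 ((n, -D.scalar) ::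
    lin (guard (validV r') D.freeT) (D.kerT n))) z &&
  checkZero (validV r') (16 * r') 11 fun n => (n, -D.scalar) :: (lin D.kerT (D.freeT n) ++
    lin (guard (validV r) D.invT) (guard (validV r') (dualT r rows) n)))

/-- Whether the kernel described by `D` is annihilated by the map `Aʳ' → Aʳ` induced by `rows`. -/
def killCheck (D : KernelData) (r r' z : ℕ) (rows : List (List (ℕ × ℤ))) : Bool :=
  allBelow (fun n => isZero 11 (lin (guard (validV r') (dualT r rows)) (D.kerT n))) z

lemma check_zero : cocycles₀.check 3 1 4 d₁ = true := by decide +kernel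
lemma check_one : cocycles₁.check 5 3 15 d₂ = true := by decide +kernel
lemma check_two : cocycles₂.check 6 5 31 d₃ = true := by decide +kernel
lemma check_odd : cocyclesOdd.check 6 6 41 dEven = true := by decide +kernel
lemma check_even : cocyclesEven.check 6 6 41 dOdd = true := by decide +kernel
lemma killCheck_zero : cocyclesOdd.killCheck 1 6 41 f₀ = true := by decide +kernel
lemma killCheck_one : cocyclesEven.killCheck 3 6 41 f₁ = true := by decide +kernel
lemma killCheck_two : cocyclesOdd.killCheck 5 6 41 f₂ = true := by decide +kernel
lemma killCheck_odd : cocyclesEven.killCheck 6 6 41 fOdd = true := by decide +kernel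
lemma killCheck_even : cocyclesOdd.killCheck 6 6 41 fEven = true := by decide +kernel

end KernelData

end Checks

section Homotopies

lemma tmul_zero_left {u : ℕ} (hu : u < 12) : tmul 0 u = [(u, 1)] := by
  have h : ∀ u < 12, tmul 0 u = [(u, 1)] := by decide +kernel
  exact h u hu

namespace Model

variable {k R A : Type} [Field k] [Ring R] [Algebra k R] [AddCommGroup A] [Module k A] [Module R A]
  (m : Model k R A)

lemma ee_smul_ev_kap (r u v : ℕ) (L : List (ℕ × ℤ)) :
    m.ee u v • ev (m.kap r) L = ev (m.kap r) (lin (act u v) L) :=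
  map_ev_lin (DistribSMul.toAddMonoidHom (Fin r → R) (m.ee u v)) (m.ee_smul_kap r u v) L

lemma ee_zero_mul (v w : ℕ) : m.ee 0 v * m.ee 0 w = ev (m.ee 0) (tmul w v) := by
  rw [m.mul, tmul_zero_left (by norm_num), ev_cons, ev_nil, one_smul, add_zero]

lemma ee_zero_smul_kap (r v : ℕ) {n : ℕ} (hn : n / 16 % 16 < 12) :
    m.ee 0 v • m.kap r n = ev (fun w => m.kap r (16 * (n / 16) + w)) (tmul (n % 16) v) := by
  have h : 256 * (n / 256) + 16 * (n / 16 % 16) = 16 * (n / 16) := by omega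
  rw [ee_smul_kap, act, tmul_zero_left hn, tens, lin, lin, List.append_nil, ev_scale, one_smul,
    ev_shift, h]

/-- The right linear map of free modules with values `S g u` on left multiples of generators. -/
noncomputable def hom (r r' : ℕ) (S : ℕ → ℕ → List (ℕ × ℤ)) :
    (Fin r → R) →ₗ[k] (Fin r' → R) :=
  ((m.frame_kap r).exists_table (m.kap r') (homT S)).choose

lemma hom_kap (r r' : ℕ) (S : ℕ → ℕ → List (ℕ × ℤ)) (n : ℕ) :
    m.hom r r' S (m.kap r n) = ev (m.kap r') (guard (validK r) (homT S) n) :=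
  ((m.frame_kap r).exists_table (m.kap r') (homT S)).choose_spec n

lemma hom_kap_eq_smul {r : ℕ} (r' : ℕ) (S : ℕ → ℕ → List (ℕ × ℤ)) {n : ℕ} (hn : n / 256 < r)
    (hn' : n / 16 % 16 < 12) :
    m.hom r r' S (m.kap r n) =
      m.ee 0 (n % 16) • ev (m.kap r') (S (n / 256) (n / 16 % 16)) := by
  rw [hom_kap, guard]
  cases hv : validK r n
  · have h : ¬ (n / 256 < r ∧ n / 16 % 16 < 12 ∧ n % 16 < 12) := by
      rw [← validK_iff, hv]; simp
    rw [m.ee_of_le_right (by omega), zero_smul, cond_false, ev_nil]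
  · rw [cond_true, homT, ee_smul_ev_kap]

lemma hom_ee_smul (r r' : ℕ) (S : ℕ → ℕ → List (ℕ × ℤ)) (v : ℕ) (x : Fin r → R) :
    m.hom r r' S (m.ee 0 v • x) = m.ee 0 v • m.hom r r' S x := by
  have key : (m.hom r r' S) ∘ₗ (Module.toModuleEnd k (S := R) (Fin r → R) (m.ee 0 v)) =
      (Module.toModuleEnd k (S := R) (Fin r' → R) (m.ee 0 v)) ∘ₗ (m.hom r r' S) := by
    refine (m.frame_kap r).ext fun n hn => ?_
    obtain ⟨h1, h2, -⟩ := validK_iff.1 hn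
    change m.hom r r' S (m.ee 0 v • m.kap r n) = m.ee 0 v • m.hom r r' S (m.kap r n)
    rw [m.ee_zero_smul_kap r v h2, map_ev, m.hom_kap_eq_smul r' S h1 h2, smul_smul, ee_zero_mul]
    refine (ev_congr (ψ := fun w => m.ee 0 w • ev (m.kap r') (S (n / 256) (n / 16 % 16)))
      fun p hp => ?_).trans (map_ev ((AddMonoidHom.smul (M := Fin r' → R)).flip
        (ev (m.kap r') (S (n / 256) (n / 16 % 16)))) (m.ee 0) _).symm
    have hp' := tmul_lt _ _ p hp
    have h3 : (16 * (n / 16) + p.1) / 256 = n / 256 := by omega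
    have h4 : (16 * (n / 16) + p.1) / 16 % 16 = n / 16 % 16 := by omega
    have h5 : (16 * (n / 16) + p.1) % 16 = p.1 := by omega
    rw [m.hom_kap_eq_smul r' S (by omega) (by omega), h3, h4, h5]
  exact LinearMap.congr_fun key x

lemma eq_zero_of_right_linear {r s : ℕ} {f : (Fin r → R) →ₗ[k] (Fin s → R)}
    (hf : ∀ v x, f (m.ee 0 v • x) = m.ee 0 v • f x) {T : ℕ → List (ℕ × ℤ)}
    (hT : ∀ n, f (m.kap r n) = ev (m.kap s) (T n))
    (h : checkZero (validL r) (256 * r) 11 T = true) : f = 0 := by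
  refine (m.frame_kap r).ext fun n hn => ?_
  obtain ⟨h1, h2, h3⟩ := validK_iff.1 hn
  have hv : validK r (16 * (n / 16)) = true := validK_iff.2 (by omega)
  have h4 : 16 * (n / 16) % 16 = 0 := by omega
  have key : m.kap r n = m.ee 0 (n % 16) • m.kap r (16 * (n / 16)) := by
    rw [m.ee_zero_smul_kap r _ (by omega), h4, tmul_zero_left h3, ev_cons, ev_nil, one_smul,
      add_zero]
    congr 1
    omega
  have hz := allBelow_iff.1 h _ (lt_of_validK hv)
  rw [validL, hv, h4, Nat.beq_refl, Bool.and_true, Bool.not_true, Bool.false_or] at hz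
  rw [key, hf, hT, ev_eq_zero 11 _ hz, smul_zero, LinearMap.zero_apply]

lemma homotopy {r r' q p : ℕ} {N : ℤ} {d f d' : List (List (ℕ × ℤ))}
    {s t s' : ℕ → ℕ → List (ℕ × ℤ)} (hd : d.length ≤ q) (hf : f.length ≤ p) (hd' : d'.length ≤ r)
    (h : homotopyCheck r r' N d s f t d' s' = true) (x : Fin r → R) :
    m.mapR q r d (m.hom r q s x) + (m.mapR p r f (m.hom r p t x) +
      m.hom r' r s' (m.mapR r r' d' x)) = N • x := by
  have key : -(N • LinearMap.id) + ((m.mapR q r d).restrictScalars k ∘ₗ m.hom r q s +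
      ((m.mapR p r f).restrictScalars k ∘ₗ m.hom r p t +
        m.hom r' r s' ∘ₗ (m.mapR r r' d').restrictScalars k)) = 0 := by
    refine m.eq_zero_of_right_linear (fun v x => ?_) (fun n => ?_) h
    · simp [hom_ee_smul, smul_comm N]
    · rw [ev_cons, ev_append, ev_append, neg_smul,
        ← map_ev_lin (m.mapR q r d) (m.mapR_kap r hd), ← map_ev_lin (m.mapR p r f) (m.mapR_kap r hf),
        ← map_ev_lin (m.hom r' r s') (m.hom_kap r' r s'), ← m.mapR_kap r' hd', ← hom_kap, ← hom_kap]
      rfl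
  have := LinearMap.congr_fun key x
  exact (neg_add_eq_zero.1 this).symm

lemma hom_tau_boundary (x : Fin 6 → R) : m.hom 6 1 tau (m.mapR 6 6 dEven x) = 0 := by
  have key : m.hom 6 1 tau ∘ₗ (m.mapR 6 6 dEven).restrictScalars k = 0 := by
    refine m.eq_zero_of_right_linear (fun v x => ?_) (fun n => ?_) tauCheck_eq
    · simp [hom_ee_smul]
    · rw [← map_ev_lin (m.hom 6 1 tau) (m.hom_kap 6 1 tau), ← m.mapR_kap (r := 6) 6 (by decide)]
      rfl
  exact LinearMap.congr_fun key x

end Model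
end Homotopies

section Complex

/-- The ranks of the Koszul complex. -/
def rk : ℕ → ℕ
  | 0 => 1
  | 1 => 3
  | 2 => 5
  | _ + 3 => 6

/-- The matrix of the differential of the Koszul complex from degree `n + 1` to degree `n`. -/
def dT : ℕ → List (List (ℕ × ℤ))
  | 0 => d₁
  | 1 => d₂
  | 2 => d₃
  | 3 => dEven
  | 4 => dOdd
  | n + 5 => dT (n + 3)

/-- The matrix of the connecting map from degree `n` to degree `n + 3`. -/
def fT : ℕ → List (List (ℕ × ℤ))
  | 0 => f₀
  | 1 => f₁
  | 2 => f₂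
  | 3 => fOdd
  | 4 => fEven
  | n + 5 => fT (n + 3)

lemma forall_of_periodic {p : ℕ → Prop} (h : ∀ n < 5, p n) (step : ∀ n, p (n + 3) → p (n + 5))
    (n : ℕ) : p n := by
  induction n using Nat.strong_induction_on with
  | _ n ih =>
    by_cases hn : n < 5
    · exact h n hn
    · obtain ⟨k, rfl⟩ := Nat.exists_eq_add_of_le' (not_lt.1 hn)
      exact step k (ih _ (by omega))

lemma length_dT (n : ℕ) : (dT n).length ≤ rk (n + 1) :=
  forall_of_periodic (p := fun n => (dT n).length ≤ rk (n + 1)) (by decide) (fun _ h => h) n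

lemma length_fT (n : ℕ) : (fT n).length ≤ rk n :=
  forall_of_periodic (p := fun n => (fT n).length ≤ rk n) (by decide) (fun _ h => h) n

lemma compZero_dT (n : ℕ) : Model.compZero (rk (n + 2)) (dT (n + 1)) (dT n) = true :=
  forall_of_periodic (p := fun n => Model.compZero (rk (n + 2)) (dT (n + 1)) (dT n) = true)
    (by decide +kernel) (fun _ h => h) n

lemma compZero_fT (n : ℕ) : Model.compZero (rk n) (fT n) (fT (n + 3)) = true :=
  forall_of_periodic (p := fun n => Model.compZero (rk n) (fT n) (fT (n + 3)) = true)
    (by decide +kernel) (fun _ h => h) n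

lemma compZero_f₀ : Model.compZero 1 f₀ d₃ = true := by decide +kernel

lemma compAddZero_fT (n : ℕ) :
    Model.compAddZero (rk (n + 1)) (fT (n + 1)) (dT (n + 3)) (dT n) (fT n) = true :=
  forall_of_periodic (p := fun n =>
    Model.compAddZero (rk (n + 1)) (fT (n + 1)) (dT (n + 3)) (dT n) (fT n) = true)
    (by decide +kernel) (fun _ h => h) n

namespace Model

variable {k R A : Type} [Field k] [Ring R] [Algebra k R] [AddCommGroup A] [Module k A] [Module R A]
  (m : Model k R A)

/-- The differential of the Koszul complex. -/
noncomputable def d (n : ℕ) : (Fin (rk (n + 1)) → R) →ₗ[R] (Fin (rk n) → R) :=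
  m.mapR (rk (n + 1)) (rk n) (dT n)

/-- The connecting map. -/
noncomputable def f (n : ℕ) : (Fin (rk n) → R) →ₗ[R] (Fin (rk (n + 3)) → R) :=
  m.mapR (rk n) (rk (n + 3)) (fT n)

lemma d_d (n : ℕ) (x : Fin (rk (n + 2)) → R) : m.d n (m.d (n + 1) x) = 0 :=
  m.mapR_comp_eq_zero (length_dT n) (compZero_dT n) x

lemma f_f (n : ℕ) (x : Fin (rk n) → R) : m.f (n + 3) (m.f n x) = 0 :=
  m.mapR_comp_eq_zero (length_fT (n + 3)) (compZero_fT n) x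

lemma d_f_zero (x : Fin (rk 0) → R) : m.d 2 (m.f 0 x) = 0 :=
  m.mapR_comp_eq_zero (length_dT 2) compZero_f₀ x

lemma d_f_add_f_d (n : ℕ) (x : Fin (rk (n + 1)) → R) :
    m.d (n + 3) (m.f (n + 1) x) + m.f n (m.d n x) = 0 :=
  m.mapR_comp_add_eq_zero (length_dT (n + 3)) (length_fT n) (compAddZero_fT n) x

end Model
end Complex

section Exactness

namespace Model

variable {k R A : Type} [Field k] [Ring R] [Algebra k R] [AddCommGroup A] [Module k A] [Module R A]
  (m : Model k R A)

/-- The augmentation of the Koszul complex. -/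
noncomputable def aug : (Fin (rk 0) → R) →ₗ[R] A :=
  (LinearMap.toSpanSingleton R A (m.e 0)).comp (LinearMap.proj ⟨0, Nat.one_pos⟩)

lemma aug_kap (n : ℕ) : m.aug (m.kap (rk 0) n) = ev m.e (guard (validK (rk 0)) augT n) := by
  cases hv : validK (rk 0) n
  · rw [(m.frame_kap (rk 0)).zero n hv, map_zero, guard, hv, cond_false, ev_nil]
  · have h : n / 256 < 1 := (validK_iff.1 hv).1
    rw [guard, hv, cond_true, augT, ← m.smul]
    change m.kap (rk 0) n ⟨0, Nat.one_pos⟩ • m.e 0 = _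
    rw [kap, if_pos (by simp only; omega)]

lemma aug_d (x : Fin (rk 1) → R) : m.aug (m.d 0 x) = 0 := by
  have key : m.aug.comp (m.d 0) = 0 := by
    refine linearMap_ext_single fun i => ?_
    rw [LinearMap.comp_apply, d, mapR_single, one_smul]
    refine (map_ev_lin m.aug m.aug_kap _).trans ?_
    have h : ∀ i < 3, isZero 11 (lin (guard (validK (rk 0)) augT) ((dT 0).getD i [])) = true := by
      decide +kernel
    exact ev_eq_zero 11 _ (h i i.2) _
  exact LinearMap.congr_fun key x

lemma augT_lt (n : ℕ) : ∀ p ∈ augT n, p.1 < 16 := lin_lt (fun _ => tmul_lt _ _) _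

lemma exists_aug_section [IsScalarTower k R A] :
    ∃ j : A →ₗ[k] (Fin (rk 0) → R), ∀ x,
      m.d 0 (m.hom (rk 0) (rk 1) (entry s₀) x) + (18 : ℤ) • j (m.aug x) = (18 : ℤ) • x := by
  have hj : ∀ i < 16, m.basisA.constr k (fun w : Fin 12 => m.kap (rk 0) w) (m.e i) =
      m.kap (rk 0) i := by
    intro i hi
    by_cases h : i < 12
    · have := m.basisA_apply ⟨i, h⟩
      rw [← this, m.basisA.constr_basis]
    · rw [m.e_of_le (not_lt.1 h), map_zero, (m.frame_kap (rk 0)).zero]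
      rw [← Bool.not_eq_true, validK_iff]
      omega
  generalize m.basisA.constr k (fun w : Fin 12 => m.kap (rk 0) w) = j at hj
  refine ⟨j, fun x => ?_⟩
  have key : -((18 : ℤ) • LinearMap.id) + ((m.d 0).restrictScalars k ∘ₗ
      m.hom (rk 0) (rk 1) (entry s₀) + (18 : ℤ) • j ∘ₗ m.aug.restrictScalars k) = 0 := by
    refine (m.frame_kap (rk 0)).eq_zero (fun n => lt_of_validK) (ψ := m.kap (rk 0))
      (fun n hn => ?_) augCheck_eq
    rw [ev_cons, ev_append, neg_smul, ev_scale]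
    have h1 : j (m.aug (m.kap (rk 0) n)) = ev (m.kap (rk 0)) (augT n) := by
      rw [aug_kap, guard, hn, cond_true, map_ev]
      exact ev_congr fun p hp => hj _ (augT_lt n p hp)
    rw [← h1]
    have h2 := map_ev_lin (m.mapR (rk 1) (rk 0) d₁) (m.mapR_kap (rk 0) (length_dT 0))
      (guard (validK 1) (homT (entry s₀)) n)
    rw [← h2]
    have h3 := m.hom_kap (rk 0) (rk 1) (entry s₀) n
    have h4 : validK (rk 0) = validK 1 := rfl
    rw [h4] at h3
    rw [← h3]
    rfl
  exact (neg_add_eq_zero.1 (LinearMap.congr_fun key x)).symm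

lemma aug_surjective [IsScalarTower k R A] : Function.Surjective m.aug := by
  have h : LinearMap.range (m.aug.restrictScalars k) = ⊤ := by
    rw [eq_top_iff, ← m.basisA.span_eq, Submodule.span_le]
    rintro _ ⟨w, rfl⟩
    refine ⟨m.kap (rk 0) w, ?_⟩
    rw [m.basisA_apply]
    refine (m.aug_kap w).trans ?_
    have hw : ∀ w < 12, guard (validK (rk 0)) augT w = [(w, 1)] := by decide +kernel
    rw [hw w w.2, ev_cons, one_smul, ev_nil, add_zero]
  exact (LinearMap.range_eq_top (f := m.aug.restrictScalars k)).1 h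

lemma eq_inv_smul {V : Type} [AddCommGroup V] [Module k V] {N : ℤ} (hN : (N : k) ≠ 0) {x y : V}
    (h : y = N • x) : (N : k)⁻¹ • y = x := by
  rw [h, ← Int.cast_smul_eq_zsmul k, smul_smul, inv_mul_cancel₀ hN, one_smul]

lemma exists_d_zero [IsScalarTower k R A] (h : ((18 : ℤ) : k) ≠ 0) {x : Fin (rk 0) → R}
    (hx : m.aug x = 0) : ∃ y, m.d 0 y = x := by
  obtain ⟨j, hj⟩ := m.exists_aug_section
  specialize hj x
  rw [hx, map_zero, smul_zero, add_zero] at hj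
  refine ⟨((18 : ℤ) : k)⁻¹ • m.hom (rk 0) (rk 1) (entry s₀) x, ?_⟩
  rw [LinearMap.map_smul_of_tower]
  exact eq_inv_smul h hj

lemma exists_d_of_check {r r' q : ℕ} {N : ℤ} (hN : (N : k) ≠ 0) {d d' : List (List (ℕ × ℤ))}
    {s s' : ℕ → ℕ → List (ℕ × ℤ)} (hd : d.length ≤ q) (hd' : d'.length ≤ r)
    (h : homotopyCheck r r' N d s [] (fun _ _ => []) d' s' = true) {x : Fin r → R}
    (hx : m.mapR r r' d' x = 0) : ∃ y, m.mapR q r d y = x := by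
  have key := m.homotopy (p := 0) hd le_rfl hd' h x
  rw [hx, map_zero, add_zero, Subsingleton.elim (m.hom r 0 _ x) 0, map_zero, add_zero] at key
  refine ⟨(N : k)⁻¹ • m.hom r q s x, ?_⟩
  rw [LinearMap.map_smul_of_tower]
  exact eq_inv_smul hN key

lemma exists_d_add_f (h : ((18 : ℤ) : k) ≠ 0) {x : Fin (rk 3) → R} (hx : m.d 2 x = 0) :
    ∃ y z, m.d 3 y + m.f 0 z = x := by
  have key := m.homotopy (length_dT 3) (length_fT 0) (length_dT 2) homotopyCheck_three x
  have hx' : m.mapR 6 5 d₃ x = 0 := hx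
  change m.d 3 _ + (m.f 0 _ + m.hom _ _ _ (m.mapR 6 5 d₃ x)) = _ at key
  rw [hx', map_zero, add_zero] at key
  refine ⟨((18 : ℤ) : k)⁻¹ • m.hom (rk 3) (rk 4) (entry s₃) x,
    ((18 : ℤ) : k)⁻¹ • m.hom (rk 3) (rk 0) (entry t₃) x, ?_⟩
  rw [LinearMap.map_smul_of_tower, LinearMap.map_smul_of_tower, ← smul_add]
  exact eq_inv_smul h key

lemma exists_d_zero_of_f (h : ((18 : ℤ) : k) ≠ 0) {x : Fin (rk 4) → R} {y : Fin (rk 0) → R}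
    (hx : m.d 3 x + m.f 0 y = 0) : ∃ z, m.d 0 z = y := by
  have key := m.homotopy (p := 0) (length_dT 0) le_rfl (length_fT 0) homotopyCheck_tau y
  rw [Subsingleton.elim (m.hom (rk 0) 0 _ y) 0, map_zero] at key
  have h1 : m.hom (rk 3) (rk 0) tau (m.f 0 y) = 0 := by
    rw [eq_neg_of_add_eq_zero_right hx]
    exact (map_neg (m.hom (rk 3) (rk 0) tau) _).trans (neg_eq_zero.2 (m.hom_tau_boundary x))
  change m.d 0 _ + (0 + m.hom (rk 3) (rk 0) tau (m.f 0 y)) = _ at key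
  rw [h1, add_zero, add_zero] at key
  refine ⟨((18 : ℤ) : k)⁻¹ • m.hom (rk 0) (rk 1) (entry s₀) y, ?_⟩
  rw [LinearMap.map_smul_of_tower]
  exact eq_inv_smul h key

lemma exists_d_succ (h : ((18 : ℤ) : k) ≠ 0) {n : ℕ} (hn : n ≠ 2) {x : Fin (rk (n + 1)) → R}
    (hx : m.d n x = 0) : ∃ y, m.d (n + 1) y = x := by
  have h1 : ((1 : ℤ) : k) ≠ 0 := by simp
  have key : ∀ n, n ≠ 2 → ∀ x : Fin (rk (n + 1)) → R, m.d n x = 0 → ∃ y, m.d (n + 1) y = x := by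
    refine forall_of_periodic (fun n hn => ?_) fun n ih _ => ih (by omega)
    interval_cases n
    · exact fun _ x => m.exists_d_of_check h (length_dT 1) (length_dT 0) homotopyCheck_one
    · exact fun _ x => m.exists_d_of_check h (length_dT 2) (length_dT 1) homotopyCheck_two
    · exact fun h => absurd rfl h
    · exact fun _ x => m.exists_d_of_check h1 (length_dT 4) (length_dT 3) homotopyCheck_even
    · exact fun _ x => m.exists_d_of_check h1 (length_dT 5) (length_dT 4) homotopyCheck_odd
  exact key n hn x hx

end Model
end Exactness

section Resolution

/-- The modules of the projective resolution: `P n` is the direct sum of the terms of the Koszul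
complex in degrees `n, n - 4, n - 8, …`. -/
noncomputable def P (R : Type) [Ring R] : ℕ → ModuleCat.{0} R
  | 0 => ModuleCat.of R (Fin (rk 0) → R)
  | 1 => ModuleCat.of R (Fin (rk 1) → R)
  | 2 => ModuleCat.of R (Fin (rk 2) → R)
  | 3 => ModuleCat.of R (Fin (rk 3) → R)
  | n + 4 => ModuleCat.of R ((Fin (rk (n + 4)) → R) × P R n)

/-- The decomposition of the terms of the projective resolution. -/
noncomputable def pair (R : Type) [Ring R] (n : ℕ) :
    ((Fin (rk (n + 4)) → R) × P R n) ≃ₗ[R] P R (n + 4) :=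
  LinearEquiv.refl R _

/-- The projection to the Koszul complex. -/
noncomputable def proj (R : Type) [Ring R] : (n : ℕ) → P R n →ₗ[R] (Fin (rk n) → R)
  | 0 => LinearMap.id
  | 1 => LinearMap.id
  | 2 => LinearMap.id
  | 3 => LinearMap.id
  | n + 4 => LinearMap.fst R (Fin (rk (n + 4)) → R) (P R n) ∘ₗ (pair R n).symm.toLinearMap

@[simp] lemma proj_pair (R : Type) [Ring R] (n : ℕ) (x : (Fin (rk (n + 4)) → R) × P R n) :
    proj R (n + 4) (pair R n x) = x.1 := rfl

namespace Model

variable {k R A : Type} [Field k] [Ring R] [Algebra k R] [AddCommGroup A] [Module k A] [Module R A]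
  (m : Model k R A)

/-- The differential of the projective resolution. -/
noncomputable def D : (n : ℕ) → P R (n + 1) →ₗ[R] P R n
  | 0 => m.d 0
  | 1 => m.d 1
  | 2 => m.d 2
  | 3 => (m.d 3).coprod (m.f 0) ∘ₗ (pair R 0).symm.toLinearMap
  | n + 4 => (pair R n).toLinearMap ∘ₗ
      (((m.d (n + 4)).coprod (m.f (n + 1) ∘ₗ proj R (n + 1))).prod
        (D n ∘ₗ LinearMap.snd R (Fin (rk (n + 5)) → R) (P R (n + 1)))) ∘ₗ (pair R (n + 1)).symm.toLinearMap

lemma D_pair (n : ℕ) (x : Fin (rk (n + 5)) → R) (y : P R (n + 1)) :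
    m.D (n + 4) (pair R (n + 1) (x, y)) =
      pair R n (m.d (n + 4) x + m.f (n + 1) (proj R (n + 1) y), m.D n y) := rfl

lemma f_proj_D (n : ℕ) (x : P R (n + 1)) :
    m.f n (proj R n (m.D n x)) = m.f n (m.d n (proj R (n + 1) x)) := by
  match n, x with
  | 0, _ => rfl
  | 1, _ => rfl
  | 2, _ => rfl
  | 3, x =>
    obtain ⟨⟨x, y⟩, rfl⟩ := (pair R 0).surjective x
    have h (x : Fin (rk 4) → R) (y : Fin (rk 0) → R) :
        m.f 3 (m.d 3 x + m.f 0 y) = m.f 3 (m.d 3 x) := by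
      rw [map_add, f_f m 0, add_zero]
    exact h x y
  | n + 4, x =>
    obtain ⟨⟨x, y⟩, rfl⟩ := (pair R (n + 1)).surjective x
    rw [D_pair, proj_pair, proj_pair, map_add, f_f m (n + 1), add_zero]

lemma D_D (n : ℕ) (x : P R (n + 2)) : m.D n (m.D (n + 1) x) = 0 := by
  induction n using Nat.strong_induction_on with
  | _ n ih =>
    match n, x with
    | 0, x => exact m.d_d 0 x
    | 1, x => exact m.d_d 1 x
    | 2, x =>
      obtain ⟨⟨x, y⟩, rfl⟩ := (pair R 0).surjective x
      have h (x : Fin (rk 4) → R) (y : Fin (rk 0) → R) : m.d 2 (m.d 3 x + m.f 0 y) = 0 := by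
        rw [map_add, d_d m 2, d_f_zero, add_zero]
      exact h x y
    | 3, x =>
      obtain ⟨⟨x, y⟩, rfl⟩ := (pair R 1).surjective x
      have h (x : Fin (rk 5) → R) (y : Fin (rk 1) → R) :
          m.d 3 (m.d 4 x + m.f 1 y) + m.f 0 (m.d 0 y) = 0 := by
        have h1 := m.d_f_add_f_d 0 y
        have h2 := m.d_d 3 x
        rw [map_add, h2, add_assoc, h1, add_zero]
      exact h x y
    | n + 4, x =>
      obtain ⟨⟨x, y⟩, rfl⟩ := (pair R (n + 2)).surjective x
      have h := ih n (by omega) y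
      rw [D_pair m (n + 1), D_pair m n, h, f_proj_D, map_add, d_d m (n + 4), zero_add]
      have h' := m.d_f_add_f_d (n + 1) (proj R (n + 2) y)
      rw [h']
      exact map_zero (pair R n)

lemma exists_D (h : ((18 : ℤ) : k) ≠ 0) (n : ℕ) (x : P R (n + 1)) (hx : m.D n x = 0) :
    ∃ y, m.D (n + 1) y = x := by
  induction n using Nat.strong_induction_on with
  | _ n ih =>
    match n, x, hx with
    | 0, x, hx => exact m.exists_d_succ h (n := 0) (by omega) hx
    | 1, x, hx => exact m.exists_d_succ h (n := 1) (by omega) hx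
    | 2, x, hx =>
      obtain ⟨y, z, hyz⟩ := m.exists_d_add_f h hx
      exact ⟨pair R 0 (y, z), hyz⟩
    | 3, x, hx =>
      obtain ⟨⟨x, y⟩, rfl⟩ := (pair R 0).surjective x
      obtain ⟨z, rfl⟩ := m.exists_d_zero_of_f h hx
      have hx' : m.d 3 (x - m.f 1 z) = 0 := by
        have h1 : m.d 3 x + m.f 0 (m.d 0 z) = 0 := hx
        rw [map_sub, eq_neg_of_add_eq_zero_left h1, eq_neg_of_add_eq_zero_left (m.d_f_add_f_d 0 z),
          sub_self]
      obtain ⟨w, hw⟩ := m.exists_d_succ h (n := 3) (by omega) hx'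
      refine ⟨pair R 1 (w, z), ?_⟩
      have h2 : m.d 4 w + m.f 1 z = x := by rw [hw, sub_add_cancel]
      exact congrArg (fun t => pair R 0 (t, m.d 0 z)) h2
    | n + 4, x, hx =>
      obtain ⟨⟨x, y⟩, rfl⟩ := (pair R (n + 1)).surjective x
      rw [D_pair, LinearEquiv.map_eq_zero_iff, Prod.mk_eq_zero] at hx
      obtain ⟨z, rfl⟩ := ih n (by omega) y hx.2
      have hx' : m.d (n + 4) (x - m.f (n + 2) (proj R (n + 2) z)) = 0 := by
        have h1 := hx.1
        rw [f_proj_D] at h1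
        have h2 := m.d_f_add_f_d (n + 1) (proj R (n + 2) z)
        rw [map_sub, eq_neg_of_add_eq_zero_left h1, eq_neg_of_add_eq_zero_left h2, sub_self]
      obtain ⟨w, hw⟩ := m.exists_d_succ h (n := n + 4) (by omega) hx'
      refine ⟨pair R (n + 2) (w, z), ?_⟩
      rw [D_pair m (n + 1), hw]
      exact congrArg (fun t => pair R (n + 1) (t, m.D (n + 1) z)) (sub_add_cancel _ _)

end Model
end Resolution

section ProjectiveResolution

instance projective_P (R : Type) [Ring R] : (n : ℕ) → Module.Projective R (P R n)
  | 0 => inferInstanceAs (Module.Projective R (Fin (rk 0) → R))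
  | 1 => inferInstanceAs (Module.Projective R (Fin (rk 1) → R))
  | 2 => inferInstanceAs (Module.Projective R (Fin (rk 2) → R))
  | 3 => inferInstanceAs (Module.Projective R (Fin (rk 3) → R))
  | n + 4 =>
    have := projective_P R n
    inferInstanceAs (Module.Projective R ((Fin (rk (n + 4)) → R) × P R n))

namespace Model

variable {k R A : Type} [Field k] [Ring R] [Algebra k R] [AddCommGroup A] [Module k A] [Module R A]
  (m : Model k R A)

/-- The projective resolution as a chain complex. -/
noncomputable def chain : ChainComplex (ModuleCat.{0} R) ℕ :=
  ChainComplex.of (P R) (fun n => ModuleCat.ofHom (m.D n)) fun n => by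
    ext x
    exact m.D_D n x

lemma chain_d (n : ℕ) : m.chain.d (n + 1) n = ModuleCat.ofHom (m.D n) :=
  ChainComplex.of_d (P R) (fun n => ModuleCat.ofHom (m.D n)) n

/-- The augmentation of the projective resolution. -/
noncomputable def augHom : m.chain.X 0 ⟶ ModuleCat.of R A := ModuleCat.ofHom m.aug

lemma chain_d_augHom : m.chain.d 1 0 ≫ m.augHom = 0 := by
  rw [chain_d m 0]
  ext x
  exact m.aug_d x

lemma chain_exactAt (h : ((18 : ℤ) : k) ≠ 0) (n : ℕ) : m.chain.ExactAt (n + 1) := by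
  rw [HomologicalComplex.exactAt_iff' _ (n + 1 + 1) (n + 1) n (by simp) (by simp),
    ShortComplex.moduleCat_exact_iff]
  intro (x : P R (n + 1)) hx
  change (m.chain.d (n + 1) n).hom x = 0 at hx
  rw [chain_d] at hx
  obtain ⟨y, hy⟩ := m.exists_D h n x hx
  refine ⟨y, ?_⟩
  change (m.chain.d (n + 2) (n + 1)).hom y = x
  rw [chain_d]
  exact hy

/-- The projective resolution of `A`. -/
noncomputable def resolution [IsScalarTower k R A] (h : ((18 : ℤ) : k) ≠ 0) :
    ProjectiveResolution (ModuleCat.of R A) where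
  complex := m.chain
  projective n := ModuleCat.projective_of_categoryTheory_projective (P R n)
  π := (ChainComplex.toSingle₀Equiv _ _).symm ⟨m.augHom, m.chain_d_augHom⟩
  quasiIso := ⟨fun n => by
    cases n
    · rw [ChainComplex.quasiIsoAt₀_iff, ShortComplex.quasiIso_iff_of_zeros' _ rfl rfl rfl]
      constructor
      · rw [ShortComplex.moduleCat_exact_iff]
        intro (x : Fin (rk 0) → R) hx
        obtain ⟨y, hy⟩ := m.exists_d_zero h (x := x) (by
          have hx' : (((ChainComplex.toSingle₀Equiv m.chain (ModuleCat.of R A)).symm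
            ⟨m.augHom, m.chain_d_augHom⟩).f 0).hom x = 0 := hx
          rw [ChainComplex.toSingle₀Equiv_symm_apply_f_zero] at hx'
          exact hx')
        refine ⟨y, ?_⟩
        change (m.chain.d 1 0).hom y = x
        rw [chain_d m 0]
        exact hy
      · rw [ModuleCat.epi_iff_surjective]
        intro x
        obtain ⟨y, hy⟩ := m.aug_surjective x
        refine ⟨y, ?_⟩
        change (((ChainComplex.toSingle₀Equiv m.chain (ModuleCat.of R A)).symm
            ⟨m.augHom, m.chain_d_augHom⟩).f 0).hom y = x
        rw [ChainComplex.toSingle₀Equiv_symm_apply_f_zero]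
        exact hy
    · rw [quasiIsoAt_iff_exactAt']
      · exact m.chain_exactAt h _
      · exact ChainComplex.exactAt_succ_single_obj _ _⟩

end Model
end ProjectiveResolution

section Kernels

/-- The standard vectors of `kᶻ`, extended by zero. -/
noncomputable def stdVec (k : Type) [Field k] (z n : ℕ) : Fin z → k :=
  fun i => if (i : ℕ) = n then 1 else 0

lemma frame_stdVec (k : Type) [Field k] (z : ℕ) : Frame k (stdVec k z) (Nat.blt · z) := by
  refine Frame.of_basis (Pi.basisFun k (Fin z)) (key := Fin.val) (fun i => ?_) (fun n hn => ?_)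
    fun n hn => ?_
  · ext j
    rw [Pi.basisFun_apply, Pi.single_apply, stdVec]
    simp only [Fin.ext_iff]
  · exact ⟨⟨n, Nat.blt_eq.mp hn⟩, rfl⟩
  · ext i
    have h : ¬ n < z := by rw [← Nat.blt_eq, hn]; simp
    exact if_neg (by have := i.2; omega)

namespace KernelData

variable {k R A : Type} [Field k] [Ring R] [Algebra k R] [AddCommGroup A] [Module k A] [Module R A]
  (m : Model k R A) {D : KernelData} {r r' z : ℕ} {rows : List (List (ℕ × ℤ))}

lemma exists_table (hz : D.ker.length ≤ z) : ∃ ι : (Fin z → k) →ₗ[k] (Fin r' → A),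
    ∀ n, ι (stdVec k z n) = ev (m.nu r') (D.kerT n) := by
  obtain ⟨ι, hι⟩ := (frame_stdVec k z).exists_table (m.nu r') D.kerT
  refine ⟨ι, fun n => ?_⟩
  rw [hι]
  cases hn : Nat.blt n z
  · have h : ¬ n < z := by rw [← Nat.blt_eq, hn]; simp
    rw [guard, hn, cond_false, kerT, List.getD_eq_default _ _ (by omega)]
  · rw [guard, hn, cond_true]

variable [IsScalarTower k R A]

lemma comp_eq_zero {ι : (Fin z → k) →ₗ[k] (Fin r' → A)}
    (hι : ∀ n, ι (stdVec k z n) = ev (m.nu r') (D.kerT n))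
    (h : D.killCheck r r' z rows = true) (x : Fin z → k) : m.dualR r r' rows (ι x) = 0 := by
  have key : m.dualR r r' rows ∘ₗ ι = 0 := by
    refine (frame_stdVec k z).ext fun n hn => ?_
    rw [LinearMap.comp_apply, hι, map_ev_lin (m.dualR r r' rows) (m.dualR_nu r r' rows)]
    exact ev_eq_zero 11 _ (allBelow_iff.1 h n (Nat.blt_eq.mp hn)) _
  exact LinearMap.congr_fun key x

lemma exists_retraction {ι : (Fin z → k) →ₗ[k] (Fin r' → A)}
    (hι : ∀ n, ι (stdVec k z n) = ev (m.nu r') (D.kerT n)) (h : D.check r r' z rows = true) :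
    ∃ p : (Fin r' → A) →ₗ[k] (Fin z → k), (∀ x, p (ι x) = D.scalar • x) ∧
      ∀ x, m.dualR r r' rows x = 0 → ι (p x) = D.scalar • x := by
  rw [check, Bool.and_eq_true, Bool.and_eq_true] at h
  obtain ⟨-, h₁, h₂⟩ := h
  obtain ⟨p, hp⟩ := (m.frame_nu r').exists_table (stdVec k z) D.freeT
  obtain ⟨γ, hγ⟩ := (m.frame_nu r).exists_table (m.nu r') D.invT
  refine ⟨p, fun x => ?_, fun x hx => ?_⟩
  · have key : p ∘ₗ ι - D.scalar • LinearMap.id = 0 := by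
      refine (frame_stdVec k z).ext fun n hn => ?_
      have := ev_eq_zero 11 _ (allBelow_iff.1 h₁ n (Nat.blt_eq.mp hn)) (stdVec k z)
      rw [ev_cons] at this
      rw [LinearMap.sub_apply, LinearMap.comp_apply, hι, map_ev_lin p hp, LinearMap.smul_apply,
        LinearMap.id_apply, LinearMap.zero_apply, ← this, neg_smul, add_comm, sub_eq_add_neg]
    exact sub_eq_zero.1 (LinearMap.congr_fun key x)
  · have key : ι ∘ₗ p + γ ∘ₗ m.dualR r r' rows - D.scalar • LinearMap.id = 0 := by
      refine (m.frame_nu r').eq_zero (fun _ => lt_of_validV) (ψ := m.nu r') (fun n hn => ?_) h₂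
      rw [ev_cons, ev_append, LinearMap.sub_apply, LinearMap.add_apply, LinearMap.comp_apply,
        LinearMap.comp_apply, m.dualR_nu, map_ev_lin γ hγ, hp, map_ev_lin ι hι,
        LinearMap.smul_apply, LinearMap.id_apply, guard, hn, cond_true]
      simp only [neg_smul]
      abel
    have := sub_eq_zero.1 (LinearMap.congr_fun key x)
    rw [LinearMap.add_apply, LinearMap.comp_apply, LinearMap.comp_apply, hx, map_zero,
      add_zero] at this
    exact this

lemma killCheck_of_check (h : D.check r r' z rows = true) : D.killCheck r r' z rows = true := by
  rw [check, Bool.and_eq_true] at h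
  exact h.1

lemma finrank_ker (hN : (D.scalar : k) ≠ 0) (hz : D.ker.length ≤ z)
    (h : D.check r r' z rows = true) :
    Module.finrank k (LinearMap.ker (m.dualR r r' rows)) = z := by
  obtain ⟨ι, hι⟩ := exists_table (r' := r') m hz
  obtain ⟨p, hp, hp'⟩ := exists_retraction m hι h
  have e : LinearMap.ker (m.dualR r r' rows) ≃ₗ[k] (Fin z → k) :=
    LinearEquiv.ofBijective (p ∘ₗ Submodule.subtype _) ⟨fun x y hxy => ?_, fun w => ?_⟩
  · rw [e.finrank_eq, Module.finrank_fin_fun]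
  · have hxy' : p x = p y := hxy
    ext1
    rw [← Model.eq_inv_smul hN (hp' x x.2), hxy', Model.eq_inv_smul hN (hp' y y.2)]
  · refine ⟨⟨(D.scalar : k)⁻¹ • ι w, ?_⟩, ?_⟩
    · rw [LinearMap.mem_ker, map_smul, comp_eq_zero m hι (killCheck_of_check h), smul_zero]
    · change p ((D.scalar : k)⁻¹ • ι w) = w
      rw [map_smul, Model.eq_inv_smul hN (hp w)]

lemma dualR_eq_zero {s : ℕ} {rows' : List (List (ℕ × ℤ))} (hN : (D.scalar : k) ≠ 0)
    (hz : D.ker.length ≤ z) (h : D.check r r' z rows = true) (h' : D.killCheck s r' z rows' = true)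
    {x : Fin r' → A} (hx : m.dualR r r' rows x = 0) : m.dualR s r' rows' x = 0 := by
  obtain ⟨ι, hι⟩ := exists_table (r' := r') m hz
  obtain ⟨p, -, hp'⟩ := exists_retraction m hι h
  rw [← Model.eq_inv_smul hN (hp' x hx), map_smul, comp_eq_zero m hι h', smul_zero]

end KernelData

/-- The dimensions of the spaces of cocycles of the Koszul complex. -/
def cocycleDim : ℕ → ℕ
  | 0 => 4
  | 1 => 15
  | 2 => 31
  | _ + 3 => 41

/-- The cocycles of the Koszul complex. -/
def cocycles : ℕ → KernelData
  | 0 => cocycles₀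
  | 1 => cocycles₁
  | 2 => cocycles₂
  | 3 => cocyclesOdd
  | 4 => cocyclesEven
  | n + 5 => cocycles (n + 3)

lemma scalar_cocycles (n : ℕ) : (cocycles n).scalar = 2 ∨ (cocycles n).scalar = 6 :=
  forall_of_periodic (p := fun n => (cocycles n).scalar = 2 ∨ (cocycles n).scalar = 6)
    (by decide) (fun _ h => h) n

lemma length_cocycles (n : ℕ) : (cocycles n).ker.length ≤ cocycleDim n :=
  forall_of_periodic (p := fun n => (cocycles n).ker.length ≤ cocycleDim n)
    (by decide) (fun _ h => h) n

lemma check_cocycles (n : ℕ) :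
    (cocycles n).check (rk (n + 1)) (rk n) (cocycleDim n) (dT n) = true := by
  refine forall_of_periodic (p := fun n =>
    (cocycles n).check (rk (n + 1)) (rk n) (cocycleDim n) (dT n) = true)
    (fun n hn => ?_) (fun _ h => h) n
  interval_cases n
  exacts [KernelData.check_zero, KernelData.check_one, KernelData.check_two, KernelData.check_odd,
    KernelData.check_even]

lemma killCheck_cocycles (n : ℕ) :
    (cocycles (n + 3)).killCheck (rk n) (rk (n + 3)) (cocycleDim (n + 3)) (fT n) = true := by
  refine forall_of_periodic (p := fun n =>
    (cocycles (n + 3)).killCheck (rk n) (rk (n + 3)) (cocycleDim (n + 3)) (fT n) = true)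
    (fun n hn => ?_) (fun _ h => h) n
  interval_cases n
  exacts [KernelData.killCheck_zero, KernelData.killCheck_one, KernelData.killCheck_two,
    KernelData.killCheck_odd, KernelData.killCheck_even]

end Kernels

section Cocycles

variable {k R A : Type} [Field k] [Ring R] [Algebra k R] [AddCommGroup A] [Module k A] [Module R A]
  [IsScalarTower k R A]

section Precomp

variable {M N M' N' : Type} [AddCommGroup M] [Module R M] [AddCommGroup N] [Module R N]
  [AddCommGroup M'] [Module R M'] [AddCommGroup N'] [Module R N']

variable (k A) in
/-- Composition with an `R`-linear map, as a `k`-linear map. -/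
def precomp (f : M →ₗ[R] N) : (N →ₗ[R] A) →ₗ[k] (M →ₗ[R] A) where
  toFun φ := φ ∘ₗ f
  map_add' _ _ := rfl
  map_smul' _ _ := rfl

@[simp] lemma precomp_apply (f : M →ₗ[R] N) (φ : N →ₗ[R] A) : precomp k A f φ = φ ∘ₗ f := rfl

lemma coprod_comp_prod_eq_zero_iff {f : M →ₗ[R] N} {f' : M' →ₗ[R] N'} {g : M' →ₗ[R] N}
    (hg : ∀ φ : N →ₗ[R] A, φ ∘ₗ f = 0 → φ ∘ₗ g = 0) (φ : N →ₗ[R] A) (ψ : N' →ₗ[R] A) :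
    φ.coprod ψ ∘ₗ (f.coprod g).prod (f' ∘ₗ LinearMap.snd R M M') = 0 ↔
      φ ∘ₗ f = 0 ∧ ψ ∘ₗ f' = 0 := by
  refine ⟨fun h => ?_, fun h => ?_⟩
  · have h₁ : φ ∘ₗ f = 0 := by
      ext x
      simpa using LinearMap.congr_fun h (x, 0)
    refine ⟨h₁, ?_⟩
    ext x
    have h₂ := LinearMap.congr_fun (hg φ h₁) x
    have := LinearMap.congr_fun h (0, x)
    simp only [LinearMap.comp_apply, LinearMap.zero_apply] at h₂
    simpa [h₂] using this
  · ext x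
    · simpa using LinearMap.congr_fun h.1 x
    · have h₁ := LinearMap.congr_fun (hg φ h.1) x
      have h₂ := LinearMap.congr_fun h.2 x
      simp only [LinearMap.comp_apply, LinearMap.zero_apply] at h₁ h₂
      simp [h₁, h₂]

lemma finrank_ker_precomp_prod [Module.Finite k (N →ₗ[R] A)] [Module.Finite k (N' →ₗ[R] A)]
    {f : M →ₗ[R] N} {f' : M' →ₗ[R] N'} {g : M' →ₗ[R] N}
    (hg : ∀ φ : N →ₗ[R] A, φ ∘ₗ f = 0 → φ ∘ₗ g = 0) :
    Module.finrank k (LinearMap.ker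
      (precomp k A ((f.coprod g).prod (f' ∘ₗ LinearMap.snd R M M')))) =
      Module.finrank k (LinearMap.ker (precomp k A f)) +
        Module.finrank k (LinearMap.ker (precomp k A f')) := by
  rw [← Module.finrank_prod]
  have h (φ : N →ₗ[R] A) (ψ : N' →ₗ[R] A) :=
    coprod_comp_prod_eq_zero_iff (f' := f') hg φ ψ
  exact LinearEquiv.finrank_eq
    { toFun := fun φ => (⟨φ.1 ∘ₗ LinearMap.inl R N N', by
          have := (h (φ.1 ∘ₗ LinearMap.inl R N N') (φ.1 ∘ₗ LinearMap.inr R N N')).1 (by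
            rw [← LinearMap.comp_coprod, LinearMap.coprod_inl_inr, LinearMap.comp_id]
            exact φ.2)
          exact this.1⟩, ⟨φ.1 ∘ₗ LinearMap.inr R N N', by
          have := (h (φ.1 ∘ₗ LinearMap.inl R N N') (φ.1 ∘ₗ LinearMap.inr R N N')).1 (by
            rw [← LinearMap.comp_coprod, LinearMap.coprod_inl_inr, LinearMap.comp_id]
            exact φ.2)
          exact this.2⟩)
      invFun := fun φ => ⟨φ.1.1.coprod φ.2.1, (h _ _).2 ⟨φ.1.2, φ.2.2⟩⟩
      map_add' := fun _ _ => rfl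
      map_smul' := fun _ _ => rfl
      left_inv := fun φ => by
        ext x <;> simp
      right_inv := fun φ => by
        ext x <;> simp }

end Precomp

namespace Model

variable (m : Model k R A)

variable (k R A) in
/-- A homomorphism from a free module is determined by the images of the basis vectors. -/
noncomputable def homEquiv (r : ℕ) : (Fin r → A) ≃ₗ[k] ((Fin r → R) →ₗ[R] A) :=
  (Pi.basisFun R (Fin r)).constr k

lemma homEquiv_apply (r : ℕ) (φ : Fin r → A) (x : Fin r → R) :
    homEquiv k R A r φ x = ∑ i, x i • φ i := by
  rw [homEquiv, Module.Basis.constr_apply_fintype]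
  simp

lemma homEquiv_dualR (r r' : ℕ) (rows : List (List (ℕ × ℤ))) (φ : Fin r' → A) :
    homEquiv k R A r (m.dualR r r' rows φ) = homEquiv k R A r' φ ∘ₗ m.mapR r r' rows := by
  refine linearMap_ext_single fun i => ?_
  rw [LinearMap.comp_apply, mapR_single, one_smul, homEquiv_apply, homEquiv_apply,
    Finset.sum_eq_single i (fun j _ hj => by rw [Pi.single_eq_of_ne hj, zero_smul]) (by simp),
    Pi.single_eq_same, one_smul]
  rfl

lemma dualR_eq_zero_iff {r r' : ℕ} {rows : List (List (ℕ × ℤ))} {φ : Fin r' → A} :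
    m.dualR r r' rows φ = 0 ↔ homEquiv k R A r' φ ∘ₗ m.mapR r r' rows = 0 := by
  rw [← homEquiv_dualR, LinearEquiv.map_eq_zero_iff]

lemma finrank_ker_precomp_mapR (r r' : ℕ) (rows : List (List (ℕ × ℤ))) :
    Module.finrank k (LinearMap.ker (precomp k A (m.mapR r r' rows))) =
      Module.finrank k (LinearMap.ker (m.dualR r r' rows)) := by
  have key : LinearMap.ker (precomp k A (m.mapR r r' rows)) =
      (LinearMap.ker (m.dualR r r' rows)).map (homEquiv k R A r').toLinearMap := by
    ext φ
    obtain ⟨φ, rfl⟩ := (homEquiv k R A r').surjective φ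
    rw [Submodule.mem_map_equiv, LinearEquiv.symm_apply_apply, LinearMap.mem_ker,
      LinearMap.mem_ker, dualR_eq_zero_iff]
    rfl
  rw [key, LinearEquiv.finrank_map_eq]

lemma finrank_hom (m : Model k R A) (r : ℕ) : Module.finrank k ((Fin r → R) →ₗ[R] A) = 12 * r := by
  have := Module.Finite.of_basis m.basisA
  rw [← (homEquiv k R A r).finrank_eq, Module.finrank_pi_fintype, Finset.sum_const,
    Module.finrank_eq_card_basis m.basisA]
  simp [mul_comm]

lemma finite_hom (m : Model k R A) (r : ℕ) : Module.Finite k ((Fin r → R) →ₗ[R] A) := by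
  have := Module.Finite.of_basis m.basisA
  exact Module.Finite.equiv (homEquiv k R A r)

lemma scalar_ne_zero (h : ((18 : ℤ) : k) ≠ 0) (n : ℕ) : ((cocycles n).scalar : k) ≠ 0 := by
  rcases scalar_cocycles n with hn | hn <;> rw [hn] <;> intro h0 <;> apply h
  · rw [show (18 : ℤ) = 2 * 9 from rfl, Int.cast_mul, h0, zero_mul]
  · rw [show (18 : ℤ) = 6 * 3 from rfl, Int.cast_mul, h0, zero_mul]

lemma finrank_ker_d (h : ((18 : ℤ) : k) ≠ 0) (n : ℕ) :
    Module.finrank k (LinearMap.ker (precomp k A (m.d n))) = cocycleDim n := by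
  rw [d, finrank_ker_precomp_mapR]
  exact KernelData.finrank_ker m (scalar_ne_zero h n) (length_cocycles n) (check_cocycles n)

lemma comp_f_eq_zero (h : ((18 : ℤ) : k) ≠ 0) (n : ℕ) {φ : (Fin (rk (n + 3)) → R) →ₗ[R] A}
    (hφ : φ ∘ₗ m.d (n + 3) = 0) : φ ∘ₗ m.f n = 0 := by
  obtain ⟨φ, rfl⟩ := (homEquiv k R A _).surjective φ
  exact m.dualR_eq_zero_iff.1 (KernelData.dualR_eq_zero m (scalar_ne_zero h _) (length_cocycles _)
    (check_cocycles _) (killCheck_cocycles n) (m.dualR_eq_zero_iff.2 hφ))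

end Model
end Cocycles

section Cohomology

/-- The ranks of the terms of the projective resolution. -/
def rankP : ℕ → ℕ
  | 0 => rk 0
  | 1 => rk 1
  | 2 => rk 2
  | 3 => rk 3
  | n + 4 => rk (n + 4) + rankP n

/-- The dimensions of the spaces of cocycles. -/
def dimZ : ℕ → ℕ
  | 0 => cocycleDim 0
  | 1 => cocycleDim 1
  | 2 => cocycleDim 2
  | 3 => cocycleDim 3
  | n + 4 => cocycleDim (n + 4) + dimZ n

variable {k R A : Type} [Field k] [Ring R] [Algebra k R] [AddCommGroup A] [Module k A] [Module R A]
  [IsScalarTower k R A]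

namespace Model

variable (m : Model k R A)

lemma finite_homP (m : Model k R A) : (n : ℕ) → Module.Finite k (P R n →ₗ[R] A)
  | 0 => m.finite_hom (rk 0)
  | 1 => m.finite_hom (rk 1)
  | 2 => m.finite_hom (rk 2)
  | 3 => m.finite_hom (rk 3)
  | n + 4 => by
    have := m.finite_hom (rk (n + 4))
    have := finite_homP m n
    exact Module.Finite.equiv (LinearMap.coprodEquiv (R := R) (M := Fin (rk (n + 4)) → R)
      (M₂ := P R n) (M₃ := A) k)

lemma finrank_homP (m : Model k R A) : (n : ℕ) → Module.finrank k (P R n →ₗ[R] A) = 12 * rankP n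
  | 0 => m.finrank_hom (rk 0)
  | 1 => m.finrank_hom (rk 1)
  | 2 => m.finrank_hom (rk 2)
  | 3 => m.finrank_hom (rk 3)
  | n + 4 => by
    have := m.finite_hom (rk (n + 4))
    have := m.finite_homP n
    have h := (LinearMap.coprodEquiv (R := R) (M := Fin (rk (n + 4)) → R)
      (M₂ := P R n) (M₃ := A) k).finrank_eq
    rw [Module.finrank_prod, m.finrank_hom, finrank_homP m n] at h
    rw [rankP, mul_add]
    exact h.symm

lemma ker_precomp_D_three (h : ((18 : ℤ) : k) ≠ 0) :
    LinearMap.ker (precomp k A (m.D 3)) = LinearMap.ker (precomp k A (m.d 3)) := by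
  have key (φ : (Fin (rk 3) → R) →ₗ[R] A) :
      φ ∘ₗ (m.d 3).coprod (m.f 0) = 0 ↔ φ ∘ₗ m.d 3 = 0 := by
    rw [LinearMap.comp_coprod]
    refine ⟨fun h0 => ?_, fun h0 => ?_⟩
    · refine LinearMap.ext fun x => ?_
      simpa using LinearMap.congr_fun h0 (x, 0)
    · rw [h0, m.comp_f_eq_zero h 0 h0, LinearMap.coprod_zero_left, LinearMap.zero_comp]
  exact Submodule.ext key

lemma finrank_ker_D (h : ((18 : ℤ) : k) ≠ 0) :
    (n : ℕ) → Module.finrank k (LinearMap.ker (precomp k A (m.D n))) = dimZ n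
  | 0 => m.finrank_ker_d h 0
  | 1 => m.finrank_ker_d h 1
  | 2 => m.finrank_ker_d h 2
  | 3 => by
    rw [ker_precomp_D_three m h]
    exact m.finrank_ker_d h 3
  | n + 4 => by
    have := m.finite_hom (rk (n + 4))
    have := m.finite_homP n
    rw [dimZ, ← m.finrank_ker_d h (n + 4), ← finrank_ker_D h n]
    refine finrank_ker_precomp_prod (f' := m.D n) (g := m.f (n + 1) ∘ₗ proj R (n + 1))
      fun φ hφ => ?_
    rw [← LinearMap.comp_assoc, m.comp_f_eq_zero h (n + 1) hφ, LinearMap.zero_comp]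

end Model
end Cohomology

section Dimension

lemma finrank_homology {k : Type} [Field k] (S : ShortComplex (ModuleCat.{0} k))
    [Module.Finite k S.X₁] [Module.Finite k S.X₂] :
    Module.finrank k S.homology + Module.finrank k S.X₁ =
      Module.finrank k (LinearMap.ker S.g.hom) + Module.finrank k (LinearMap.ker S.f.hom) := by
  rw [S.moduleCatHomologyIso.toLinearEquiv.finrank_eq,
    ← LinearMap.finrank_range_add_finrank_ker S.moduleCatToCycles, ← add_assoc,
    show LinearMap.ker S.moduleCatToCycles = LinearMap.ker S.f.hom from
      LinearMap.ker_codRestrict _ _ _]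
  congr 1
  exact Submodule.finrank_quotient_add_finrank (LinearMap.range S.moduleCatToCycles)

variable {k R A : Type} [Field k] [Ring R] [Algebra k R] [AddCommGroup A] [Module k A] [Module R A]
  [IsScalarTower k R A]

namespace Model

variable (m : Model k R A)

/-- The complex of homomorphisms from the projective resolution to `A`. -/
noncomputable def cochain : CochainComplex (ModuleCat.{0} k) ℕ :=
  m.chain.linearYonedaObj k (ModuleCat.of R A)

/-- The terms of the cochain complex are the spaces of `R`-linear maps to `A`. -/
noncomputable def cochainEquiv (n : ℕ) : m.cochain.X n ≃ₗ[k] (P R n →ₗ[R] A) where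
  toFun (f : m.chain.X n ⟶ ModuleCat.of R A) := f.hom
  invFun f := (ModuleCat.ofHom f : P R n ⟶ ModuleCat.of R A)
  map_add' _ _ := rfl
  map_smul' c (f : m.chain.X n ⟶ ModuleCat.of R A) := by
    refine LinearMap.ext fun x => ?_
    exact algebraMap_smul R c (f.hom x : A)
  left_inv _ := rfl
  right_inv _ := rfl

lemma cochainEquiv_d (n : ℕ) (x : m.cochain.X n) :
    m.cochainEquiv (n + 1) ((m.cochain.d n (n + 1)).hom x) = m.cochainEquiv n x ∘ₗ m.D n := by
  have h : m.cochainEquiv (n + 1) ((m.cochain.d n (n + 1)).hom x) =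
    m.cochainEquiv n x ∘ₗ (m.chain.d (n + 1) n).hom := rfl
  rw [h, chain_d]
  rfl

lemma finrank_ker_cochain_d (h : ((18 : ℤ) : k) ≠ 0) (n : ℕ) :
    Module.finrank k (LinearMap.ker (m.cochain.d n (n + 1)).hom) = dimZ n := by
  have key : LinearMap.ker (precomp k A (m.D n)) =
      (LinearMap.ker (m.cochain.d n (n + 1)).hom).map (m.cochainEquiv n).toLinearMap := by
    ext φ
    obtain ⟨φ, rfl⟩ := (m.cochainEquiv n).surjective φ
    rw [Submodule.mem_map_equiv, LinearEquiv.symm_apply_apply, LinearMap.mem_ker,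
      LinearMap.mem_ker, precomp_apply, ← cochainEquiv_d, LinearEquiv.map_eq_zero_iff]
  rw [← m.finrank_ker_D h, key, LinearEquiv.finrank_map_eq]

lemma finite_cochain (n : ℕ) : Module.Finite k (m.cochain.X n) :=
  have := m.finite_homP n
  Module.Finite.equiv (m.cochainEquiv n).symm

lemma finrank_cochain_homology_zero (h : ((18 : ℤ) : k) ≠ 0) :
    Module.finrank k (m.cochain.homology 0) = dimZ 0 := by
  have := m.finite_cochain 0
  have : Module.Finite k (m.cochain.sc' 0 0 1).X₁ := this
  have : Module.Finite k (m.cochain.sc' 0 0 1).X₂ := this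
  have key := finrank_homology (m.cochain.sc' 0 0 1)
  have h0 : LinearMap.ker (m.cochain.sc' 0 0 1).f.hom = ⊤ := by
    change LinearMap.ker (m.cochain.d 0 0).hom = ⊤
    rw [m.cochain.shape 0 0 (by simp), ModuleCat.hom_zero, LinearMap.ker_zero]
  rw [h0, finrank_top] at key
  rw [← m.finrank_ker_cochain_d h 0,
    (m.cochain.homologyIsoSc' 0 0 1 (by simp) (by simp)).toLinearEquiv.finrank_eq]
  exact Nat.add_right_cancel key

lemma finrank_cochain_homology_succ (h : ((18 : ℤ) : k) ≠ 0) (n : ℕ) :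
    Module.finrank k (m.cochain.homology (n + 1)) + 12 * rankP n = dimZ (n + 1) + dimZ n := by
  have : Module.Finite k (m.cochain.sc' n (n + 1) (n + 2)).X₁ := m.finite_cochain n
  have : Module.Finite k (m.cochain.sc' n (n + 1) (n + 2)).X₂ := m.finite_cochain (n + 1)
  have key := finrank_homology (m.cochain.sc' n (n + 1) (n + 2))
  rw [← m.finrank_ker_cochain_d h n, ← m.finrank_ker_cochain_d h (n + 1), ← m.finrank_homP n,
    ← (m.cochainEquiv n).finrank_eq,
    (m.cochain.homologyIsoSc' n (n + 1) (n + 2) (by simp) (by simp)).toLinearEquiv.finrank_eq]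
  exact key

end Model

lemma finrank_HHcohomology {k : Type} [Field k] (h : ((18 : ℤ) : k) ≠ 0) (n : ℕ) :
    Module.finrank k (HHcohomology k n) = Module.finrank k ((model k).cochain.homology n) :=
  (((model k).resolution h).isoExt n (ModuleCat.of (FKAe k) (FK3 k))).toLinearEquiv.finrank_eq

lemma dimZ_eq (q : ℕ) : dimZ (4 * q) = 41 * q + 4 ∧ dimZ (4 * q + 1) = 41 * q + 15 ∧
    dimZ (4 * q + 2) = 41 * q + 31 ∧ dimZ (4 * q + 3) = 41 * q + 41 := by
  induction q with
  | zero => decide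
  | succ q ih =>
    have h (n : ℕ) : dimZ (n + 4) = 41 + dimZ n := rfl
    have e (i : ℕ) : 4 * (q + 1) + i = 4 * q + i + 4 := by ring
    rw [e 1, e 2, e 3, show 4 * (q + 1) = 4 * q + 4 by ring, h, h, h, h]
    omega

lemma rankP_eq (q : ℕ) : rankP (4 * q) = 6 * q + 1 ∧ rankP (4 * q + 1) = 6 * q + 3 ∧
    rankP (4 * q + 2) = 6 * q + 5 ∧ rankP (4 * q + 3) = 6 * q + 6 := by
  induction q with
  | zero => decide
  | succ q ih =>
    have h (n : ℕ) : rankP (n + 4) = 6 + rankP n := rfl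
    have e (i : ℕ) : 4 * (q + 1) + i = 4 * q + i + 4 := by ring
    rw [e 1, e 2, e 3, show 4 * (q + 1) = 4 * q + 4 by ring, h, h, h, h]
    omega

lemma finrank_HHcohomology_eq {k : Type} [Field k] (h : ((18 : ℤ) : k) ≠ 0) (q : ℕ) :
    Module.finrank k (HHcohomology k (4 * q)) = 10 * q + 4 ∧
    Module.finrank k (HHcohomology k (4 * q + 1)) = 10 * q + 7 ∧
    Module.finrank k (HHcohomology k (4 * q + 2)) = 10 * q + 10 ∧
    Module.finrank k (HHcohomology k (4 * q + 3)) = 10 * q + 12 := by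
  have hs (n : ℕ) := (model k).finrank_cochain_homology_succ h n
  have hZ := dimZ_eq q
  have hr := rankP_eq q
  have h1 := hs (4 * q)
  have h2 := hs (4 * q + 1)
  have h3 := hs (4 * q + 2)
  rw [show 4 * q + 1 + 1 = 4 * q + 2 from rfl] at h2
  rw [show 4 * q + 2 + 1 = 4 * q + 3 from rfl] at h3
  simp only [finrank_HHcohomology h]
  refine ⟨?_, by omega, by omega, by omega⟩
  cases q with
  | zero => exact (model k).finrank_cochain_homology_zero h
  | succ q =>
    have h0 := hs (4 * q + 3)
    have hZ' := dimZ_eq q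
    have hr' := rankP_eq q
    rw [show 4 * q + 3 + 1 = 4 * (q + 1) by ring] at h0
    omega

lemma eighteen_ne_zero {k : Type} [Field k] (h2 : ringChar k ≠ 2) (h3 : ringChar k ≠ 3) :
    ((18 : ℤ) : k) ≠ 0 := by
  have h2' : (2 : k) ≠ 0 := Ring.two_ne_zero h2
  have h3' : (3 : k) ≠ 0 := fun h => by
    have hd : ringChar k ∣ 3 := ringChar.dvd (by exact_mod_cast h)
    rcases (Nat.dvd_prime Nat.prime_three).1 hd with h1 | h1
    · have := CharP.ringChar_ne_one (R := k)
      exact this h1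
    · exact h3 h1
  convert mul_ne_zero (mul_ne_zero h2' h3') h3' using 1
  norm_num

end Dimension

end FKThree

/-- The dimensions of the Hochschild cohomology of `FK(3)`:
`dim HHⁿ = (5/2)n + 4` if `n ≡ 0 (mod 4)`; `(5/2)n + 5` if `n ≡ 2 (mod 4)`;
`(5n+9)/2` if `n` is odd. -/
theorem FK3_hochschildCohomology_dim (h2 : ringChar k ≠ 2) (h3 : ringChar k ≠ 3) :
    (∀ n : ℕ, n % 4 = 0 → (Module.finrank k (HHcohomology k n) : ℚ) = 5 / 2 * n + 4) ∧
    (∀ n : ℕ, n % 4 = 2 → (Module.finrank k (HHcohomology k n) : ℚ) = 5 / 2 * n + 5) ∧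
    (∀ n : ℕ, Odd n → (Module.finrank k (HHcohomology k n) : ℚ) = (5 * n + 9) / 2) := by
  have h := FKThree.finrank_HHcohomology_eq (FKThree.eighteen_ne_zero h2 h3)
  refine ⟨fun n hn => ?_, fun n hn => ?_, fun n hn => ?_⟩
  · obtain ⟨q, rfl⟩ : ∃ q, n = 4 * q := ⟨n / 4, by omega⟩
    rw [(h q).1]
    push_cast
    ring
  · obtain ⟨q, rfl⟩ : ∃ q, n = 4 * q + 2 := ⟨n / 4, by omega⟩
    rw [(h q).2.2.1]
    push_cast
    ring
  · rw [Nat.odd_iff] at hn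
    obtain ⟨q, rfl | rfl⟩ : ∃ q, n = 4 * q + 1 ∨ n = 4 * q + 3 := ⟨n / 4, by omega⟩
    · rw [(h q).2.1]
      push_cast
      ring
    · rw [(h q).2.2.2]
      push_cast
      ring
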